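/- Let k be a field of characteristic p > 0. Let X (resp. Y) be a scheme of finite type over k equipped with an action of an infinitesimal group scheme I (resp. J). Then the product morphism φ_{X,I} × φ_{Y,J} : X × Y → X/I × Y/J factors uniquely through an isomorphism (X × Y)/(I × J) ≅ X/I × Y/J, where I × J acts componentwise on X × Y. -/

import Mathlib

open AlgebraicGeometry CategoryTheory CategoryTheory.Limits Opposite

universe u

noncomputable section

/-- The spectrum of the field `k`, the base of all schemes considered. -/
abbrev Spk (k : Type u) [Field k] : Scheme.{u} := Spec (CommRingCat.of k)

/-- A scheme over the field `k`: a scheme together with a structure morphism to `Spec k`. -/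
structure SchemeOver (k : Type u) [Field k] : Type (u + 1) where
  carrier : Scheme.{u}
  str : carrier ⟶ Spk k

variable (k : Type u) [Field k]

/-- A group scheme over `k`, presented via its functor of points: for every scheme `T`
and every pair of `T`-points lying over the same `T`-point of `Spec k`, a product point,
together with unit and inverse, satisfying the group axioms functorially. -/
structure GroupSchemeOver extends SchemeOver k where
  mul : ∀ {T : Scheme.{u}} (a b : T ⟶ carrier), a ≫ str = b ≫ str → (T ⟶ carrier)
  one : Spk k ⟶ carrier
  inv : ∀ {T : Scheme.{u}}, (T ⟶ carrier) → (T ⟶ carrier)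
  mul_str : ∀ {T : Scheme.{u}} (a b : T ⟶ carrier) (h), mul a b h ≫ str = a ≫ str
  one_str : one ≫ str = 𝟙 (Spk k)
  inv_str : ∀ {T : Scheme.{u}} (a : T ⟶ carrier), inv a ≫ str = a ≫ str
  mul_natural : ∀ {T' T : Scheme.{u}} (g : T' ⟶ T) (a b : T ⟶ carrier) (h h'),
    g ≫ mul a b h = mul (g ≫ a) (g ≫ b) h'
  inv_natural : ∀ {T' T : Scheme.{u}} (g : T' ⟶ T) (a : T ⟶ carrier),
    g ≫ inv a = inv (g ≫ a)
  mul_assoc : ∀ {T : Scheme.{u}} (a b c : T ⟶ carrier) (h₁ h₂ h₃ h₄),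
    mul (mul a b h₁) c h₂ = mul a (mul b c h₃) h₄
  one_mul : ∀ {T : Scheme.{u}} (a : T ⟶ carrier) (h), mul (a ≫ str ≫ one) a h = a
  mul_one : ∀ {T : Scheme.{u}} (a : T ⟶ carrier) (h), mul a (a ≫ str ≫ one) h = a
  inv_mul : ∀ {T : Scheme.{u}} (a : T ⟶ carrier) (h), mul (inv a) a h = a ≫ str ≫ one

variable {k}

theorem GroupSchemeOver.mul_congr (G : GroupSchemeOver k) {T : Scheme.{u}}
    {a a' b b' : T ⟶ G.carrier} (ha : a = a') (hb : b = b') (h h') :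
    G.mul a b h = G.mul a' b' h' := by subst ha; subst hb; rfl

/-- A homomorphism of group schemes over `k`. -/
structure GroupHom (G H : GroupSchemeOver k) where
  hom : G.carrier ⟶ H.carrier
  hom_str : hom ≫ H.str = G.str
  hom_one : G.one ≫ hom = H.one
  hom_mul : ∀ {T : Scheme.{u}} (a b : T ⟶ G.carrier) (h h'),
    G.mul a b h ≫ hom = H.mul (a ≫ hom) (b ≫ hom) h'

/-- An action of a group scheme `G` over `k` on a scheme `X` over `k`, presented via
its functor of points. -/
structure ActionOver (G : GroupSchemeOver k) (X : SchemeOver k) where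
  act : ∀ {T : Scheme.{u}} (g : T ⟶ G.carrier) (x : T ⟶ X.carrier),
    g ≫ G.str = x ≫ X.str → (T ⟶ X.carrier)
  act_str : ∀ {T : Scheme.{u}} (g : T ⟶ G.carrier) (x : T ⟶ X.carrier) (h),
    act g x h ≫ X.str = x ≫ X.str
  act_natural : ∀ {T' T : Scheme.{u}} (f : T' ⟶ T) (g : T ⟶ G.carrier)
    (x : T ⟶ X.carrier) (h h'), f ≫ act g x h = act (f ≫ g) (f ≫ x) h'
  one_act : ∀ {T : Scheme.{u}} (x : T ⟶ X.carrier) (h), act (x ≫ X.str ≫ G.one) x h = x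
  mul_act : ∀ {T : Scheme.{u}} (g g' : T ⟶ G.carrier) (x : T ⟶ X.carrier) (h₁ h₂ h₃ h₄),
    act (G.mul g g' h₁) x h₂ = act g (act g' x h₃) h₄

theorem ActionOver.act_congr {G : GroupSchemeOver k} {X : SchemeOver k}
    (α : ActionOver G X) {T : Scheme.{u}} {g g' : T ⟶ G.carrier} {x x' : T ⟶ X.carrier}
    (hg : g = g') (hx : x = x') (h h') : α.act g x h = α.act g' x' h' := by
  subst hg; subst hx; rfl

/-- The action of a group scheme on itself by left translations. -/
def GroupSchemeOver.selfAction (G : GroupSchemeOver k) : ActionOver G G.toSchemeOver where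
  act g x h := G.mul g x h
  act_str g x h := (G.mul_str g x h).trans h
  act_natural f g x h h' := G.mul_natural f g x h h'
  one_act x h := G.one_mul x h
  mul_act g g' x h₁ h₂ h₃ h₄ := G.mul_assoc g g' x h₁ h₂ h₃ h₄

/-- Restriction of an action along a homomorphism of group schemes. -/
def ActionOver.res {G H : GroupSchemeOver k} {X : SchemeOver k} (φ : GroupHom H G)
    (α : ActionOver G X) : ActionOver H X where
  act g x h := α.act (g ≫ φ.hom) x (by rw [Category.assoc, φ.hom_str, h])
  act_str g x h := α.act_str _ _ _
  act_natural f g x h h' := by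
    refine (α.act_natural f (g ≫ φ.hom) x _ ?_).trans (α.act_congr ?_ rfl _ _)
    · simp only [Category.assoc, φ.hom_str, ← h']
    · simp only [Category.assoc]
  one_act x h := by
    refine (α.act_congr ?_ rfl _ ?_).trans (α.one_act x ?_)
    · simp only [Category.assoc, φ.hom_one]
    · simp only [Category.assoc, G.one_str, Category.comp_id]
    · simp only [Category.assoc, G.one_str, Category.comp_id]
  mul_act g g' x h₁ h₂ h₃ h₄ := by
    have hg : g ≫ H.str = x ≫ X.str := (H.mul_str g g' h₁).symm.trans h₂
    have hg' : g' ≫ H.str = x ≫ X.str := h₁.symm.trans hg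
    have p1 : (g ≫ φ.hom) ≫ G.str = (g' ≫ φ.hom) ≫ G.str := by
      simp only [Category.assoc, φ.hom_str]; exact h₁
    have p3 : (g' ≫ φ.hom) ≫ G.str = x ≫ X.str := by
      simp only [Category.assoc, φ.hom_str]; exact hg'
    refine (α.act_congr (φ.hom_mul g g' h₁ p1) rfl _ ?_).trans
      (α.mul_act (g ≫ φ.hom) (g' ≫ φ.hom) x p1 ?_ p3 ?_)
    · rw [G.mul_str]
      simp only [Category.assoc, φ.hom_str]; exact hg
    · rw [G.mul_str]
      simp only [Category.assoc, φ.hom_str]; exact hg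
    · rw [α.act_str]
      simp only [Category.assoc, φ.hom_str]; exact hg
/-! ### Vector bundles and line bundles, geometrically -/

/-- The data underlying a (geometric) vector bundle on a scheme `X`: a total space `π : tot ⟶ X`
together with a fiberwise `Γ(T, ⊤)`-module structure on the `T`-points of `tot` over a fixed
`T`-point of `X`, functorially in `T`. -/
structure VecBundleData (X : Scheme.{u}) : Type (u + 1) where
  tot : Scheme.{u}
  π : tot ⟶ X
  zero : X ⟶ tot
  zero_π : zero ≫ π = 𝟙 X
  add : ∀ {T : Scheme.{u}} (a b : T ⟶ tot), a ≫ π = b ≫ π → (T ⟶ tot)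
  smul : ∀ {T : Scheme.{u}} (f : Γ(T, ⊤)) (a : T ⟶ tot), T ⟶ tot
  add_π : ∀ {T : Scheme.{u}} (a b : T ⟶ tot) (h), add a b h ≫ π = a ≫ π
  smul_π : ∀ {T : Scheme.{u}} (f : Γ(T, ⊤)) (a : T ⟶ tot), smul f a ≫ π = a ≫ π
  add_natural : ∀ {T' T : Scheme.{u}} (g : T' ⟶ T) (a b : T ⟶ tot) (h h'),
    g ≫ add a b h = add (g ≫ a) (g ≫ b) h'
  smul_natural : ∀ {T' T : Scheme.{u}} (g : T' ⟶ T) (f : Γ(T, ⊤)) (a : T ⟶ tot),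
    g ≫ smul f a = smul (g.appTop f) (g ≫ a)
  add_comm : ∀ {T : Scheme.{u}} (a b : T ⟶ tot) (h h'), add a b h = add b a h'
  add_assoc : ∀ {T : Scheme.{u}} (a b c : T ⟶ tot) (h₁ h₂ h₃ h₄),
    add (add a b h₁) c h₂ = add a (add b c h₃) h₄
  zero_add : ∀ {T : Scheme.{u}} (a : T ⟶ tot) (h), add ((a ≫ π) ≫ zero) a h = a
  one_smul : ∀ {T : Scheme.{u}} (a : T ⟶ tot), smul 1 a = a
  mul_smul : ∀ {T : Scheme.{u}} (f g : Γ(T, ⊤)) (a : T ⟶ tot), smul (f * g) a = smul f (smul g a)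
  smul_add : ∀ {T : Scheme.{u}} (f : Γ(T, ⊤)) (a b : T ⟶ tot) (h h'),
    smul f (add a b h) = add (smul f a) (smul f b) h'
  add_smul : ∀ {T : Scheme.{u}} (f g : Γ(T, ⊤)) (a : T ⟶ tot) (h),
    smul (f + g) a = add (smul f a) (smul g a) h
  zero_smul : ∀ {T : Scheme.{u}} (a : T ⟶ tot), smul 0 a = (a ≫ π) ≫ zero
  smul_zero : ∀ {T : Scheme.{u}} (f : Γ(T, ⊤)) (x : T ⟶ X), smul f (x ≫ zero) = x ≫ zero

namespace VecBundleData

variable {X : Scheme.{u}} (E : VecBundleData X)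

theorem add_congr {T : Scheme.{u}} {a a' b b' : T ⟶ E.tot} (ha : a = a') (hb : b = b')
    (h h') : E.add a b h = E.add a' b' h' := by subst ha; subst hb; rfl

/-- The fiber of a vector bundle over a `T`-point of the base. -/
abbrev Fiber {T : Scheme.{u}} (x : T ⟶ X) : Type u := { a : T ⟶ E.tot // a ≫ E.π = x }

instance fiberZero {T : Scheme.{u}} (x : T ⟶ X) : Zero (E.Fiber x) :=
  ⟨⟨x ≫ E.zero, by rw [Category.assoc, E.zero_π, Category.comp_id]⟩⟩

instance fiberAdd {T : Scheme.{u}} (x : T ⟶ X) : Add (E.Fiber x) :=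
  ⟨fun a b => ⟨E.add a.1 b.1 (a.2.trans b.2.symm), (E.add_π _ _ _).trans a.2⟩⟩

instance fiberSMul {T : Scheme.{u}} (x : T ⟶ X) : SMul Γ(T, ⊤) (E.Fiber x) :=
  ⟨fun f a => ⟨E.smul f a.1, (E.smul_π _ _).trans a.2⟩⟩

@[simp] theorem coe_fiber_zero {T : Scheme.{u}} (x : T ⟶ X) :
    ((0 : E.Fiber x) : T ⟶ E.tot) = x ≫ E.zero := rfl

@[simp] theorem coe_fiber_add {T : Scheme.{u}} (x : T ⟶ X) (a b : E.Fiber x) :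
    ((a + b : E.Fiber x) : T ⟶ E.tot) = E.add a.1 b.1 (a.2.trans b.2.symm) := rfl

@[simp] theorem coe_fiber_smul {T : Scheme.{u}} (x : T ⟶ X) (f : Γ(T, ⊤)) (a : E.Fiber x) :
    ((f • a : E.Fiber x) : T ⟶ E.tot) = E.smul f a.1 := rfl

instance {T : Scheme.{u}} (x : T ⟶ X) : AddCommMonoid (E.Fiber x) where
  add_assoc a b c := Subtype.ext (E.add_assoc _ _ _ _ _ _ _)
  add_comm a b := Subtype.ext (E.add_comm _ _ _ _)
  zero_add a := Subtype.ext (by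
    have hz : ((a.1 ≫ E.π) ≫ E.zero) ≫ E.π = a.1 ≫ E.π := by
      rw [Category.assoc, E.zero_π, Category.comp_id]
    show E.add (x ≫ E.zero) a.1 _ = a.1
    exact (E.add_congr (by rw [a.2]) rfl _ hz).trans (E.zero_add a.1 hz))
  add_zero a := Subtype.ext (by
    have hz : ((a.1 ≫ E.π) ≫ E.zero) ≫ E.π = a.1 ≫ E.π := by
      rw [Category.assoc, E.zero_π, Category.comp_id]
    have hz' : (x ≫ E.zero) ≫ E.π = a.1 ≫ E.π := by
      rw [Category.assoc, E.zero_π, Category.comp_id, a.2]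
    show E.add a.1 (x ≫ E.zero) _ = a.1
    exact (E.add_comm _ _ _ hz').trans
      ((E.add_congr (by rw [a.2]) rfl _ hz).trans (E.zero_add a.1 hz)))
  nsmul := nsmulRec
  nsmul_zero _ := rfl
  nsmul_succ _ _ := rfl

instance {T : Scheme.{u}} (x : T ⟶ X) : Module Γ(T, ⊤) (E.Fiber x) where
  one_smul a := Subtype.ext (E.one_smul a.1)
  mul_smul f g a := Subtype.ext (E.mul_smul f g a.1)
  smul_zero f := Subtype.ext (E.smul_zero f x)
  smul_add f a b := Subtype.ext (E.smul_add f a.1 b.1 _ _)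
  add_smul f g a := Subtype.ext (E.add_smul f g a.1 _)
  zero_smul a := Subtype.ext ((E.zero_smul a.1).trans (by rw [a.2]; rfl))

/-- A family of `n` local sections of `E` over an open subset `U` is a frame if every point
of the total space over `U` is, in a unique way, a linear combination of these sections. -/
def IsFrame {n : ℕ} (U : X.Opens) (s : Fin n → (U.toScheme ⟶ E.tot)) : Prop :=
  ∃ hs : ∀ i, s i ≫ E.π = U.ι,
    ∀ {T : Scheme.{u}} (x : T ⟶ U.toScheme),
      Function.Bijective (fun f : Fin n → Γ(T, ⊤) =>
        (∑ i, f i • (⟨x ≫ s i, by rw [Category.assoc, hs i]⟩ : E.Fiber (x ≫ U.ι))))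

/-- A family of `n` global sections of `E` is a global frame if every point of the total
space is, in a unique way, a linear combination of these sections. -/
def IsGlobalFrame {n : ℕ} (s : Fin n → (X ⟶ E.tot)) : Prop :=
  ∃ hs : ∀ i, s i ≫ E.π = 𝟙 X,
    ∀ {T : Scheme.{u}} (x : T ⟶ X),
      Function.Bijective (fun f : Fin n → Γ(T, ⊤) =>
        (∑ i, f i • (⟨x ≫ s i, by rw [Category.assoc, hs i, Category.comp_id]⟩ : E.Fiber x)))

end VecBundleData

/-- A (geometric) vector bundle of rank `n` on `X`: bundle data which is locally trivial,
i.e. admits local frames around every point of `X`. -/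
structure VecBundle (n : ℕ) (X : Scheme.{u}) extends VecBundleData X where
  locTriv : ∀ x : X, ∃ (U : X.Opens) (s : Fin n → (U.toScheme ⟶ tot)),
    x ∈ U ∧ toVecBundleData.IsFrame U s

/-- A (geometric) line bundle on a scheme. -/
abbrev LineBundle (X : Scheme.{u}) := VecBundle 1 X

/-- A morphism of total spaces of vector bundles over `X` is linear if it commutes with the
projections, the fiberwise additions and the fiberwise scalar multiplications. -/
def IsLinearHom {X : Scheme.{u}} (E F : VecBundleData X) (φ : E.tot ⟶ F.tot) : Prop :=
  (φ ≫ F.π = E.π) ∧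
  (∀ {T : Scheme.{u}} (a b : T ⟶ E.tot) (h h'), E.add a b h ≫ φ = F.add (a ≫ φ) (b ≫ φ) h') ∧
  (∀ {T : Scheme.{u}} (f : Γ(T, ⊤)) (a : T ⟶ E.tot), E.smul f a ≫ φ = F.smul f (a ≫ φ))

/-- Two vector bundles on `X` are isomorphic if there is a linear isomorphism between them. -/
def VBIso {X : Scheme.{u}} {n m : ℕ} (E : VecBundle n X) (F : VecBundle m X) : Prop :=
  ∃ φ : E.tot ⟶ F.tot, IsLinearHom E.toVecBundleData F.toVecBundleData φ ∧ IsIso φ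

/-- `F` is a pullback of the vector bundle `E` along `g : Y ⟶ X`. -/
def IsPullbackBundle {Y X : Scheme.{u}} (g : Y ⟶ X) {n : ℕ} (E : VecBundle n X)
    (F : VecBundle n Y) : Prop :=
  ∃ τ : F.tot ⟶ E.tot,
    (τ ≫ E.π = F.π ≫ g) ∧
    (∀ {T : Scheme.{u}} (a b : T ⟶ F.tot) (h h'), F.add a b h ≫ τ = E.add (a ≫ τ) (b ≫ τ) h') ∧
    (∀ {T : Scheme.{u}} (f : Γ(T, ⊤)) (a : T ⟶ F.tot), F.smul f a ≫ τ = E.smul f (a ≫ τ)) ∧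
    (∀ {T : Scheme.{u}} (y : T ⟶ Y) (a : T ⟶ E.tot), a ≫ E.π = y ≫ g →
      ∃! b : T ⟶ F.tot, b ≫ F.π = y ∧ b ≫ τ = a)

/-- A vector bundle is trivial if it admits a global frame. -/
def IsTrivialBundle {X : Scheme.{u}} {n : ℕ} (E : VecBundle n X) : Prop :=
  ∃ s : Fin n → (X ⟶ E.tot), E.toVecBundleData.IsGlobalFrame s

/-- `N` is a tensor product of the line bundles `L` and `M`: witnessed by a fiberwise
bilinear pairing taking local frames to local frames. -/
def IsTensor {X : Scheme.{u}} (L M N : LineBundle X) : Prop :=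
  ∃ β : ∀ {T : Scheme.{u}} (a : T ⟶ L.tot) (b : T ⟶ M.tot), a ≫ L.π = b ≫ M.π → (T ⟶ N.tot),
    (∀ {T : Scheme.{u}} (a : T ⟶ L.tot) (b : T ⟶ M.tot) (h), β a b h ≫ N.π = a ≫ L.π) ∧
    (∀ {T' T : Scheme.{u}} (g : T' ⟶ T) (a : T ⟶ L.tot) (b : T ⟶ M.tot) (h h'),
      g ≫ β a b h = β (g ≫ a) (g ≫ b) h') ∧
    (∀ {T : Scheme.{u}} (a a' : T ⟶ L.tot) (b : T ⟶ M.tot) (h₁ h₂ h₃ h₄ h₅),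
      β (L.add a a' h₁) b h₂ = N.add (β a b h₃) (β a' b h₄) h₅) ∧
    (∀ {T : Scheme.{u}} (a : T ⟶ L.tot) (b b' : T ⟶ M.tot) (h₁ h₂ h₃ h₄ h₅),
      β a (M.add b b' h₁) h₂ = N.add (β a b h₃) (β a b' h₄) h₅) ∧
    (∀ {T : Scheme.{u}} (f : Γ(T, ⊤)) (a : T ⟶ L.tot) (b : T ⟶ M.tot) (h₁ h₂),
      β (L.smul f a) b h₁ = N.smul f (β a b h₂)) ∧
    (∀ {T : Scheme.{u}} (f : Γ(T, ⊤)) (a : T ⟶ L.tot) (b : T ⟶ M.tot) (h₁ h₂),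
      β a (M.smul f b) h₁ = N.smul f (β a b h₂)) ∧
    (∀ (U : X.Opens) (sL : Fin 1 → (U.toScheme ⟶ L.tot)) (sM : Fin 1 → (U.toScheme ⟶ M.tot)),
      L.toVecBundleData.IsFrame U sL → M.toVecBundleData.IsFrame U sM →
      ∀ (h : sL 0 ≫ L.π = sM 0 ≫ M.π),
        N.toVecBundleData.IsFrame (n := 1) U (fun _ => β (sL 0) (sM 0) h))

/-- `N` is an `m`-th tensor power of the line bundle `L`. -/
def IsTensorPow {X : Scheme.{u}} (L : LineBundle X) : ℕ → LineBundle X → Prop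
  | 0, N => IsTrivialBundle N
  | m + 1, N => ∃ M : LineBundle X, IsTensorPow L m M ∧ IsTensor M L N

/-- A line bundle is ample if the base is quasi-compact and quasi-separated and the
non-vanishing loci of global sections of positive tensor powers give an affine open cover. -/
def IsAmple {X : Scheme.{u}} (L : LineBundle X) : Prop :=
  CompactSpace X ∧ QuasiSeparatedSpace X ∧
  ∀ x : X, ∃ (m : ℕ), 0 < m ∧ ∃ (N : LineBundle X), IsTensorPow L m N ∧
    ∃ (s : X ⟶ N.tot), s ≫ N.π = 𝟙 X ∧
      ∃ U : X.Opens, IsAffineOpen U ∧ x ∈ U ∧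
        (U : Set X) = {y : X | s.base y ≠ N.zero.base y}
/-! ### Properties of schemes and group schemes over `k` -/

/-- An algebraic group over `k` is a group scheme of finite type over `k`. -/
def GroupSchemeOver.IsAlgebraic {k : Type u} [Field k] (G : GroupSchemeOver k) : Prop :=
  LocallyOfFiniteType G.str ∧ QuasiCompact G.str

/-- A scheme of finite type over `k`. -/
def SchemeOver.IsFiniteType {k : Type u} [Field k] (X : SchemeOver k) : Prop :=
  LocallyOfFiniteType X.str ∧ QuasiCompact X.str

/-- A variety over `k`: an integral separated scheme of finite type over `k`. -/
def SchemeOver.IsVariety {k : Type u} [Field k] (X : SchemeOver k) : Prop :=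
  IsIntegral X.carrier ∧ AlgebraicGeometry.IsSeparated X.str ∧ X.IsFiniteType

/-- A scheme is normal if all its local rings are integrally closed domains. -/
def IsNormalScheme (X : Scheme.{u}) : Prop :=
  ∀ x : X, IsDomain (X.presheaf.stalk x) ∧ IsIntegrallyClosed (X.presheaf.stalk x)

/-- The base change of a scheme over `k` to the algebraic closure of `k`. -/
def SchemeOver.geomFiber {k : Type u} [Field k] (X : SchemeOver k) : Scheme.{u} :=
  pullback X.str (Spec.map (CommRingCat.ofHom (algebraMap k (AlgebraicClosure k))))

/-- A scheme over `k` is geometrically integral if its base change to an algebraic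
closure of `k` is integral. -/
def SchemeOver.IsGeomIntegral {k : Type u} [Field k] (X : SchemeOver k) : Prop :=
  IsIntegral X.geomFiber

/-- A scheme over `k` is geometrically connected if its base change to an algebraic
closure of `k` is connected. -/
def SchemeOver.IsGeomConnected {k : Type u} [Field k] (X : SchemeOver k) : Prop :=
  ConnectedSpace X.geomFiber

/-- A scheme over `k` is geometrically irreducible if its base change to an algebraic
closure of `k` is irreducible. -/
def SchemeOver.IsGeomIrreducible {k : Type u} [Field k] (X : SchemeOver k) : Prop :=
  IrreducibleSpace X.geomFiber

/-- An open subscheme of a scheme over `k`, as a scheme over `k`. -/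
def SchemeOver.ofOpens {k : Type u} [Field k] (X : SchemeOver k) (U : X.carrier.Opens) :
    SchemeOver k :=
  ⟨U.toScheme, U.ι ≫ X.str⟩

/-- A scheme over `k` is quasi-projective if it is separated, of finite type, and carries
an ample line bundle. -/
def SchemeOver.IsQuasiProjective {k : Type u} [Field k] (X : SchemeOver k) : Prop :=
  AlgebraicGeometry.IsSeparated X.str ∧ X.IsFiniteType ∧
    ∃ L : LineBundle X.carrier, IsAmple L

/-- An open subset of `X` is stable under an action of `G` if the action preserves its
`T`-points, for all `T`. -/
def ActionOver.Stable {k : Type u} [Field k] {G : GroupSchemeOver k} {X : SchemeOver k}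
    (α : ActionOver G X) (U : X.carrier.Opens) : Prop :=
  ∀ {T : Scheme.{u}} (g : T ⟶ G.carrier) (x : T ⟶ X.carrier) (h),
    Set.range x.base ⊆ (U : Set X.carrier) →
      Set.range (α.act g x h).base ⊆ (U : Set X.carrier)

/-- A `G`-linearization of a vector bundle `E` on a `G`-scheme `X`: an action of `G` on the
total space of `E`, lifting the action on `X` and acting linearly on the fibers (equivalently,
an action of `G × 𝔾ₘ` on `E` for which the projection is equivariant and `𝔾ₘ` acts by
multiplication on the fibers). -/
structure LinearizationData {k : Type u} [Field k] {G : GroupSchemeOver k} {X : SchemeOver k}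
    (α : ActionOver G X) {n : ℕ} (E : VecBundle n X.carrier) where
  lact : ∀ {T : Scheme.{u}} (g : T ⟶ G.carrier) (e : T ⟶ E.tot),
    g ≫ G.str = (e ≫ E.π) ≫ X.str → (T ⟶ E.tot)
  lact_π : ∀ {T : Scheme.{u}} (g : T ⟶ G.carrier) (e : T ⟶ E.tot) (h h'),
    lact g e h ≫ E.π = α.act g (e ≫ E.π) h'
  lact_natural : ∀ {T' T : Scheme.{u}} (f : T' ⟶ T) (g : T ⟶ G.carrier) (e : T ⟶ E.tot) (h h'),
    f ≫ lact g e h = lact (f ≫ g) (f ≫ e) h'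
  one_lact : ∀ {T : Scheme.{u}} (e : T ⟶ E.tot) (h), lact (((e ≫ E.π) ≫ X.str) ≫ G.one) e h = e
  mul_lact : ∀ {T : Scheme.{u}} (g g' : T ⟶ G.carrier) (e : T ⟶ E.tot) (h₁ h₂ h₃ h₄),
    lact (G.mul g g' h₁) e h₂ = lact g (lact g' e h₃) h₄
  lact_add : ∀ {T : Scheme.{u}} (g : T ⟶ G.carrier) (a b : T ⟶ E.tot) (h₁ h₂ h₃ h₄ h₅),
    lact g (E.add a b h₁) h₂ = E.add (lact g a h₃) (lact g b h₄) h₅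
  lact_smul : ∀ {T : Scheme.{u}} (g : T ⟶ G.carrier) (f : Γ(T, ⊤)) (a : T ⟶ E.tot) (h₁ h₂),
    lact g (E.smul f a) h₁ = E.smul f (lact g a h₂)

/-- A vector bundle is `G`-linearized (linearizable) if it admits a linearization. -/
def ActionOver.IsLinearized {k : Type u} [Field k] {G : GroupSchemeOver k} {X : SchemeOver k}
    (α : ActionOver G X) {n : ℕ} (E : VecBundle n X.carrier) : Prop :=
  Nonempty (LinearizationData α E)

/-- Equivariance of a morphism relative to a homomorphism of group schemes. -/
def IsEquivariantRel {k : Type u} [Field k] {G H : GroupSchemeOver k} {X Y : SchemeOver k}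
    (φ : GroupHom G H) (α : ActionOver G X) (β : ActionOver H Y)
    (f : X.carrier ⟶ Y.carrier) : Prop :=
  f ≫ Y.str = X.str ∧
  ∀ {T : Scheme.{u}} (g : T ⟶ G.carrier) (x : T ⟶ X.carrier) (h h'),
    α.act g x h ≫ f = β.act (g ≫ φ.hom) (x ≫ f) h'

/-- Equivariance of a morphism of `G`-schemes. -/
def IsEquivariant {k : Type u} [Field k] {G : GroupSchemeOver k} {X Y : SchemeOver k}
    (α : ActionOver G X) (β : ActionOver G Y) (f : X.carrier ⟶ Y.carrier) : Prop :=
  f ≫ Y.str = X.str ∧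
  ∀ {T : Scheme.{u}} (g : T ⟶ G.carrier) (x : T ⟶ X.carrier) (h h'),
    α.act g x h ≫ f = β.act g (x ≫ f) h'

/-- A `T`-point of `G` acts trivially if it acts trivially on all points of `X` over `T`. -/
def ActionOver.ActsTrivially {k : Type u} [Field k] {G : GroupSchemeOver k}
    {X : SchemeOver k} (α : ActionOver G X) {T : Scheme.{u}} (g : T ⟶ G.carrier) : Prop :=
  ∀ {T' : Scheme.{u}} (t : T' ⟶ T) (x : T' ⟶ X.carrier) (h), α.act (t ≫ g) x h = x

/-- An action is almost faithful if its kernel is finite, i.e. all trivially acting points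
factor through a fixed closed subscheme of `G` which is finite over `k`. -/
def ActionOver.IsAlmostFaithful {k : Type u} [Field k] {G : GroupSchemeOver k}
    {X : SchemeOver k} (α : ActionOver G X) : Prop :=
  ∃ (K : Scheme.{u}) (ι : K ⟶ G.carrier), IsClosedImmersion ι ∧ IsFinite (ι ≫ G.str) ∧
    ∀ {T : Scheme.{u}} (g : T ⟶ G.carrier), α.ActsTrivially g → ∃ g' : T ⟶ K, g' ≫ ι = g

/-- An abelian variety over `k` is a smooth connected proper algebraic group over `k`. -/
def GroupSchemeOver.IsAbelianVariety {k : Type u} [Field k] (G : GroupSchemeOver k) : Prop :=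
  G.IsAlgebraic ∧ IsSmooth G.str ∧ ConnectedSpace G.carrier ∧ IsProper G.str
/-! ### Frobenius twists and quotients in characteristic `p` -/

/-- The morphism `Spec k ⟶ Spec k` induced by the `n`-th iterate of the Frobenius of `k`. -/
def frobSpec (k : Type u) [Field k] (p : ℕ) [Fact p.Prime] [CharP k p] (n : ℕ) :
    Spk k ⟶ Spk k :=
  Spec.map (CommRingCat.ofHom (iterateFrobenius k p n))

/-- `F : X ⟶ X` is the absolute `q`-power Frobenius endomorphism of `X`: the identity on the
underlying space, and the `q`-th power map on functions. -/
def IsAbsoluteFrobenius (X : Scheme.{u}) (q : ℕ) (F : X ⟶ X) : Prop :=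
  (∀ x : X, F.base x = x) ∧
  ∀ (U : X.Opens) (e : Opposite.op U = Opposite.op (F ⁻¹ᵁ U)) (a : Γ(X, U)),
    F.app U a = X.presheaf.map (eqToHom e) (a ^ q)

/-- Data exhibiting the `n`-th Frobenius twist `X^{(pⁿ)}` of a scheme `X` over `k` (as the base
change of `X` along the `n`-th Frobenius of `k`), together with the relative Frobenius morphism
`F^n_{X/k} : X ⟶ X^{(pⁿ)}` (the canonical factorization of the absolute Frobenius). -/
structure FrobeniusData (k : Type u) [Field k] (p : ℕ) [Fact p.Prime] [CharP k p] (n : ℕ)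
    (X : SchemeOver k) where
  tw : SchemeOver k
  pr : tw.carrier ⟶ X.carrier
  is_pullback : IsPullback pr tw.str X.str (frobSpec k p n)
  rel : X.carrier ⟶ tw.carrier
  rel_str : rel ≫ tw.str = X.str
  abs : X.carrier ⟶ X.carrier
  abs_frob : IsAbsoluteFrobenius X.carrier (p ^ n) abs
  rel_pr : rel ≫ pr = abs

/-- A group scheme over `k` is infinitesimal if it is finite and radicial over `Spec k`. -/
def GroupSchemeOver.IsInfinitesimal {k : Type u} [Field k] (I : GroupSchemeOver k) : Prop :=
  I.IsAlgebraic ∧ IsFinite I.str ∧ UniversallyInjective I.str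

/-- `n` is at least the height of the infinitesimal group scheme `I`, i.e. the `n`-th relative
Frobenius of `I` factors through the unit section of the twist (equivalently `I_n = I`). -/
def FrobKillsAt (k : Type u) [Field k] (p : ℕ) [Fact p.Prime] [CharP k p]
    (I : GroupSchemeOver k) (n : ℕ) : Prop :=
  ∀ FD : FrobeniusData k p n I.toSchemeOver,
    ∃ u : Spk k ⟶ FD.tw.carrier,
      u ≫ FD.pr = frobSpec k p n ≫ I.one ∧ u ≫ FD.tw.str = 𝟙 (Spk k) ∧
      FD.rel = I.str ≫ u

/-- `φ : X ⟶ Q` is a categorical quotient (in the category of schemes over `k`) of `X` by the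
action `α`. -/
def IsCatQuotient {k : Type u} [Field k] {I : GroupSchemeOver k} {X : SchemeOver k}
    (α : ActionOver I X) (Q : SchemeOver k) (φ : X.carrier ⟶ Q.carrier) : Prop :=
  φ ≫ Q.str = X.str ∧
  (∀ {T : Scheme.{u}} (g : T ⟶ I.carrier) (x : T ⟶ X.carrier) (h),
    α.act g x h ≫ φ = x ≫ φ) ∧
  ∀ (Z : SchemeOver k) (u : X.carrier ⟶ Z.carrier), u ≫ Z.str = X.str →
    (∀ {T : Scheme.{u}} (g : T ⟶ I.carrier) (x : T ⟶ X.carrier) (h),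
      α.act g x h ≫ u = x ≫ u) →
    ∃! v : Q.carrier ⟶ Z.carrier, φ ≫ v = u

/-- Data exhibiting the Frobenius twist `G^{(pⁿ)}` of a group scheme `G` over `k`, as a group
scheme, together with the relative Frobenius homomorphism. -/
structure TwistedGroupData (k : Type u) [Field k] (p : ℕ) [Fact p.Prime] [CharP k p] (n : ℕ)
    (G : GroupSchemeOver k) where
  tw : GroupSchemeOver k
  pr : tw.carrier ⟶ G.carrier
  is_pullback : IsPullback pr tw.str G.str (frobSpec k p n)
  pr_mul : ∀ {T : Scheme.{u}} (a b : T ⟶ tw.carrier) (h h'),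
    tw.mul a b h ≫ pr = G.mul (a ≫ pr) (b ≫ pr) h'
  rel : GroupHom G tw
  abs : G.carrier ⟶ G.carrier
  abs_frob : IsAbsoluteFrobenius G.carrier (p ^ n) abs
  rel_pr : rel.hom ≫ pr = abs

/-- Data exhibiting the Frobenius twist of an action: the induced action of `G^{(pⁿ)}` on
`X^{(pⁿ)}`, compatible with the projections and with the relative Frobenii. -/
structure TwistedActionData {k : Type u} [Field k] {p : ℕ} [Fact p.Prime] [CharP k p] {n : ℕ}
    {G : GroupSchemeOver k} {X : SchemeOver k} (α : ActionOver G X)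
    (GT : TwistedGroupData k p n G) (FD : FrobeniusData k p n X) where
  tact : ActionOver GT.tw FD.tw
  compat : ∀ {T : Scheme.{u}} (g : T ⟶ GT.tw.carrier) (x : T ⟶ FD.tw.carrier) (h h'),
    tact.act g x h ≫ FD.pr = α.act (g ≫ GT.pr) (x ≫ FD.pr) h'
  rel_equivariant : ∀ {T : Scheme.{u}} (g : T ⟶ G.carrier) (x : T ⟶ X.carrier) (h h'),
    α.act g x h ≫ FD.rel = tact.act (g ≫ GT.rel.hom) (x ≫ FD.rel) h'

/-!
Write `R = I ×ₖ X` with its projection `a` and action map `b` to `X`. As `I` is infinitesimal, `a`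
and `b` agree on points and the function `b f - a f` on `R` is nilpotent, so in characteristic `p`
some `f ^ p ^ n` is invariant. The invariant functions therefore define a quotient `X ⟶ X / I` that
is a universal homeomorphism and over which, locally, they form the equalizer of `a` and `b` on
functions. A morphism with these properties is the coequalizer of `a` and `b`, and flat base change
preserves the properties. Over a field every base change is flat: base change along
`X/I ×ₖ Y ⟶ X/I` and `X/I ×ₖ Y/J ⟶ Y/J` shows that each factor of
`X ×ₖ Y ⟶ X/I ×ₖ Y ⟶ X/I ×ₖ Y/J` has the universal property of a coequalizer, and points of
`I ×ₖ J` of the form `(i, 1)` and `(1, j)` detect invariance.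
-/

section FlatBaseChange

variable {R S M₁ M₂ M₃ N₁ N₂ N₃ : Type*} [CommRing R] [CommRing S] [Algebra R S]
  [AddCommGroup M₁] [AddCommGroup M₂] [AddCommGroup M₃]
  [AddCommGroup N₁] [AddCommGroup N₂] [AddCommGroup N₃]
  [Module R M₁] [Module R M₂] [Module R M₃] [Module R N₁] [Module R N₂] [Module R N₃]
  [Module S N₁] [Module S N₂] [Module S N₃]
  [IsScalarTower R S N₁] [IsScalarTower R S N₂] [IsScalarTower R S N₃]
  {h₁ : M₁ →ₗ[R] N₁} {h₂ : M₂ →ₗ[R] N₂} {h₃ : M₃ →ₗ[R] N₃}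
  {f : M₁ →ₗ[R] M₂} {g : M₂ →ₗ[R] M₃} {f' : N₁ →ₗ[S] N₂} {g' : N₂ →ₗ[S] N₃}

theorem comp_isBaseChange_equiv (isb₁ : IsBaseChange S h₁) (isb₂ : IsBaseChange S h₂)
    (comm : ∀ m, f' (h₁ m) = h₂ (f m)) :
    f' ∘ₗ isb₁.equiv.toLinearMap = isb₂.equiv.toLinearMap ∘ₗ f.baseChange S := by
  ext m
  simp [IsBaseChange.equiv_tmul, comm]

theorem injective_of_isBaseChange_of_flat [Module.Flat R S] (isb₁ : IsBaseChange S h₁)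
    (isb₂ : IsBaseChange S h₂) (comm : ∀ m, f' (h₁ m) = h₂ (f m)) (hf : Function.Injective f) :
    Function.Injective f' := by
  refine Function.Injective.of_comp_right ?_ isb₁.equiv.surjective
  rw [show f' ∘ isb₁.equiv = isb₂.equiv ∘ f.baseChange S from
    congrArg DFunLike.coe (comp_isBaseChange_equiv isb₁ isb₂ comm)]
  exact isb₂.equiv.injective.comp (Module.Flat.lTensor_preserves_injective_linearMap f hf)

theorem exact_of_isBaseChange_of_flat [Module.Flat R S] (isb₁ : IsBaseChange S h₁)
    (isb₂ : IsBaseChange S h₂) (isb₃ : IsBaseChange S h₃) (comm₁₂ : ∀ m, f' (h₁ m) = h₂ (f m))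
    (comm₂₃ : ∀ m, g' (h₂ m) = h₃ (g m)) (hfg : Function.Exact f g) : Function.Exact f' g' :=
  Function.Exact.of_ladder_linearEquiv_of_exact (comp_isBaseChange_equiv isb₁ isb₂ comm₁₂)
    (comp_isBaseChange_equiv isb₂ isb₃ comm₂₃) (Module.Flat.lTensor_exact S hfg)

end FlatBaseChange

/-- The ring map `i` exhibits its source as the subring on which the ring maps `a` and `b`
agree. -/
structure IsRingEqualizer {A₀ A M : CommRingCat.{u}} (i : A₀ ⟶ A) (a b : A ⟶ M) : Prop where
  injective : Function.Injective i
  range_eq : Set.range i = {x | a x = b x}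

namespace IsRingEqualizer

variable {A₀ A M B A' M' : CommRingCat.{u}} {i : A₀ ⟶ A} {a b : A ⟶ M}

theorem comp_eq (h : IsRingEqualizer i a b) : i ≫ a = i ≫ b :=
  CommRingCat.hom_ext <| RingHom.ext fun x => h.range_eq.le ⟨x, rfl⟩

theorem exists_lift (h : IsRingEqualizer i a b) (s : B ⟶ A) (hs : s ≫ a = s ≫ b) :
    ∃ l : B ⟶ A₀, l ≫ i = s := by
  let e : A₀ ≃+* i.hom.range := RingEquiv.ofBijective i.hom.rangeRestrict
    ⟨fun x y hxy => h.injective (congrArg Subtype.val hxy), i.hom.rangeRestrict_surjective⟩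
  have hmem (c : B) : s.hom c ∈ i.hom.range := h.range_eq.ge (ConcreteCategory.congr_hom hs c)
  refine ⟨CommRingCat.ofHom ((e.symm : i.hom.range →+* A₀).comp (s.hom.codRestrict _ hmem)), ?_⟩
  ext c
  exact congrArg Subtype.val (e.apply_symm_apply ⟨s.hom c, hmem c⟩)

theorem iso_comp (h : IsRingEqualizer i a b) (j : B ⟶ A₀) [IsIso j] :
    IsRingEqualizer (j ≫ i) a b where
  injective := h.injective.comp (ConcreteCategory.bijective_of_isIso j).injective
  range_eq :=
    ((ConcreteCategory.bijective_of_isIso j).surjective.range_comp i).trans h.range_eq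

theorem of_isPushout_of_flat (h : IsRingEqualizer i a b) {j : A₀ ⟶ B} {i' : B ⟶ A'} {u : A ⟶ A'}
    {v : M ⟶ M'} {m' : B ⟶ M'} {a' b' : A' ⟶ M'} (hj : j.hom.Flat)
    (hA : IsPushout i j u i') (hM : IsPushout (i ≫ a) j v m')
    (ha : u ≫ a' = a ≫ v) (hb : u ≫ b' = b ≫ v) (ha' : i' ≫ a' = m') (hb' : i' ≫ b' = m') :
    IsRingEqualizer i' a' b' := by
  let := i.hom.toAlgebra
  let := j.hom.toAlgebra
  let := i'.hom.toAlgebra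
  let := u.hom.toAlgebra
  let := (i ≫ a).hom.toAlgebra
  let := v.hom.toAlgebra
  let := m'.hom.toAlgebra
  let := (i ≫ u).hom.toAlgebra
  let := (j ≫ m').hom.toAlgebra
  have : Module.Flat A₀ B := hj
  have : IsScalarTower A₀ A A' := .of_algebraMap_eq' rfl
  have : IsScalarTower A₀ B A' := .of_algebraMap_eq' congr(($hA.w).hom)
  have : IsScalarTower A₀ M M' := .of_algebraMap_eq' congr(($hM.w).hom).symm
  have : IsScalarTower A₀ B M' := .of_algebraMap_eq' rfl
  have := (CommRingCat.isPushout_iff_isPushout (R := A₀) (R' := B) (S := A) (S' := A')).mp hA.flip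
  have := (CommRingCat.isPushout_iff_isPushout (R := A₀) (R' := B) (S := M) (S' := M')).mp hM.flip
  have isbA := Algebra.IsPushout.out (R := A₀) (S := B) (R' := A) (S' := A')
  have isbM := Algebra.IsPushout.out (R := A₀) (S := B) (R' := M) (S' := M')
  let aₐ : A →ₐ[A₀] M := ⟨a.hom, fun _ => rfl⟩
  let bₐ : A →ₐ[A₀] M := ⟨b.hom, fun x => (ConcreteCategory.congr_hom h.comp_eq x).symm⟩
  let aₐ' : A' →ₐ[B] M' := ⟨a'.hom, ConcreteCategory.congr_hom ha'⟩
  let bₐ' : A' →ₐ[B] M' := ⟨b'.hom, ConcreteCategory.congr_hom hb'⟩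
  have exact_iff : Function.Exact (Algebra.linearMap A₀ A) (aₐ.toLinearMap - bₐ.toLinearMap) :=
    fun x => sub_eq_zero.trans (Set.ext_iff.mp h.range_eq x).symm
  have comm₁₂ (x : A₀) := (ConcreteCategory.congr_hom hA.w x).symm
  have comm₂₃ (x : A) : (aₐ'.toLinearMap - bₐ'.toLinearMap) (u x) =
      v ((aₐ.toLinearMap - bₐ.toLinearMap) x) :=
    (congr_arg₂ (· - ·) (ConcreteCategory.congr_hom ha x) (ConcreteCategory.congr_hom hb x)).trans
      (map_sub v.hom _ _).symm
  refine ⟨injective_of_isBaseChange_of_flat (f := Algebra.linearMap A₀ A)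
    (f' := Algebra.linearMap B A') (.linearMap A₀ B) isbA comm₁₂ h.injective, Set.ext fun z => ?_⟩
  exact (exact_of_isBaseChange_of_flat (f := Algebra.linearMap A₀ A) (f' := Algebra.linearMap B A')
    (.linearMap A₀ B) isbA isbM comm₁₂ comm₂₃ exact_iff z).symm.trans sub_eq_zero

end IsRingEqualizer

section PthPowers

variable {A₀ A : CommRingCat.{u}} (i : A₀ ⟶ A) {p : ℕ} [Fact p.Prime]

theorem exists_pow_eq_pow_of_isNilpotent_sub {R : Type*} [CommRing R] (hp : (p : R) = 0)
    {x y : R} (h : IsNilpotent (x - y)) : ∃ n : ℕ, x ^ p ^ n = y ^ p ^ n := by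
  obtain _ | _ := subsingleton_or_nontrivial R
  · exact ⟨0, Subsingleton.elim _ _⟩
  have := (CharP.charP_iff_prime_eq_zero Fact.out).mpr hp
  obtain ⟨n, hn⟩ := h
  refine ⟨n, sub_eq_zero.mp ?_⟩
  rw [← sub_pow_char_pow]
  exact pow_eq_zero_of_le (Nat.lt_pow_self (Fact.out : p.Prime).one_lt).le hn

theorem isIntegralHom_SpecMap_of_pow_mem (h : ∀ x : A, ∃ n, x ^ p ^ n ∈ Set.range i) :
    IsIntegralHom (Spec.map i) := by
  refine IsIntegralHom.SpecMap_iff.mpr fun x => ?_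
  let := i.hom.toAlgebra
  obtain ⟨n, y, hy⟩ := h x
  exact IsIntegral.of_pow (pow_pos (Fact.out : p.Prime).pos n) (hy ▸ i.hom.isIntegralElem_map)

theorem universallyInjective_SpecMap_of_pow_mem (hp : (p : A) = 0)
    (h : ∀ x : A, ∃ n, x ^ p ^ n ∈ Set.range i) : UniversallyInjective (Spec.map i) := by
  refine ((tfae_universallyInjective (Spec.map i)).out 0 1).mpr ?_
  intro K _ f g hfg
  obtain ⟨f, rfl⟩ := Spec.map_surjective f
  obtain ⟨g, rfl⟩ := Spec.map_surjective g
  simp only [← Spec.map_comp, Spec.map_inj] at hfg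
  have : CharP K p := (CharP.charP_iff_prime_eq_zero Fact.out).mpr (by simpa using congr(f.hom $hp))
  refine congrArg Spec.map (CommRingCat.hom_ext <| RingHom.ext fun x => ?_)
  obtain ⟨n, y, hy⟩ := h x
  apply iterateFrobenius_inj K p n
  rw [iterateFrobenius_def, iterateFrobenius_def, ← map_pow, ← map_pow, ← hy]
  exact ConcreteCategory.congr_hom hfg y

end PthPowers

section Localization

variable {A₀ A M A₀' A' M' : CommRingCat.{u}} {i : A₀ ⟶ A} {a b : A ⟶ M} {i' : A₀' ⟶ A'}
  {a' b' : A' ⟶ M'}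

theorem exists_isPushout_of_isLocalization_away {S S' : CommRingCat.{u}} (i : A₀ ⟶ S) (v : S ⟶ S')
    {f : A₀} (hv : @IsLocalization.Away S _ (i f) S' _ v.hom.toAlgebra) :
    ∃ m : CommRingCat.of (Localization.Away f) ⟶ S',
      IsPushout i (CommRingCat.ofHom (algebraMap A₀ (Localization.Away f))) v m := by
  let := v.hom.toAlgebra
  have hf : IsUnit ((v.hom.comp i.hom) f) := IsLocalization.Away.algebraMap_isUnit (i f)
  have hM : IsLocalization ((Submonoid.powers f).map i.hom) S' := by
    rwa [Submonoid.map_powers]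
  exact ⟨_, CommRingCat.isPushout_of_isLocalization i.hom (IsLocalization.Away.lift f hf)
    (IsLocalization.Away.lift_comp f hf) (.powers f)⟩

namespace IsRingEqualizer

theorem exists_iso (h : IsRingEqualizer i a b) {i₁ : A₀' ⟶ A} (h₁ : IsRingEqualizer i₁ a b) :
    ∃ e : A₀ ≅ A₀', e.hom ≫ i₁ = i := by
  have := ConcreteCategory.mono_of_injective _ h.injective
  have := ConcreteCategory.mono_of_injective _ h₁.injective
  obtain ⟨l, hl⟩ := h₁.exists_lift i h.comp_eq
  obtain ⟨l', hl'⟩ := h.exists_lift i₁ h₁.comp_eq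
  exact ⟨⟨l, l', by simp [← cancel_mono i, hl, hl'], by simp [← cancel_mono i₁, hl, hl']⟩, hl⟩

theorem isOpenImmersion_SpecMap_of_isLocalization_away (h : IsRingEqualizer i a b)
    (h' : IsRingEqualizer i' a' b') {r : A₀ ⟶ A₀'} {u : A ⟶ A'} {v : M ⟶ M'}
    (hr : r ≫ i' = i ≫ u) (ha : u ≫ a' = a ≫ v) (hb : u ≫ b' = b ≫ v) {f : A₀}
    (hu : @IsLocalization.Away A _ (i f) A' _ u.hom.toAlgebra)
    (hv : @IsLocalization.Away M _ (a (i f)) M' _ v.hom.toAlgebra) :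
    IsOpenImmersion (Spec.map r) := by
  let j := CommRingCat.ofHom (algebraMap A₀ (Localization.Away f))
  have : Epi j := inferInstance
  obtain ⟨iA, hA⟩ := exists_isPushout_of_isLocalization_away i u hu
  obtain ⟨iM, hM⟩ := exists_isPushout_of_isLocalization_away (i ≫ a) v hv
  have hloc : IsRingEqualizer iA a' b' := by
    have hj : j.hom.Flat := RingHom.flat_algebraMap_iff.mpr (IsLocalization.flat _ (.powers f))
    refine h.of_isPushout_of_flat hj hA hM ha hb ?_ ?_ <;> rw [← cancel_epi j]
    · rw [← hM.w, ← hA.w_assoc, ha, Category.assoc]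
    · rw [← hM.w, ← hA.w_assoc, hb, h.comp_eq, Category.assoc]
  obtain ⟨e, he⟩ := hloc.exists_iso h'
  have hje : j ≫ e.hom = r := by
    have := ConcreteCategory.mono_of_injective _ h'.injective
    rw [← cancel_mono i', Category.assoc, he, hr, hA.w]
  have : IsOpenImmersion (Spec.map j) := .of_isLocalization f
  rw [← hje, Spec.map_comp]
  infer_instance

end IsRingEqualizer

end Localization

section RadicialQuotient

variable {R X Q R' X' Q' : Scheme.{u}}

/-- Over the open set `V` of `Q`, the structure sheaf of `Q` is the equalizer of the two pullback
maps from the functions on `X` to the functions on `R`. -/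
def IsSectionEqualizer (a b : R ⟶ X) (φ : X ⟶ Q) (V : Q.Opens) : Prop :=
  ∃ h : (a ≫ φ) ⁻¹ᵁ V ≤ b ⁻¹ᵁ φ ⁻¹ᵁ V, IsRingEqualizer (φ.app V)
    (a.appLE (φ ⁻¹ᵁ V) ((a ≫ φ) ⁻¹ᵁ V) (a.comp_preimage φ V).le)
    (b.appLE (φ ⁻¹ᵁ V) ((a ≫ φ) ⁻¹ᵁ V) h)

/-- The quotient of a scheme `X` by an infinitesimal relation `a, b : R ⟶ X`: a universal
homeomorphism `φ : X ⟶ Q` over which `R` is affine and such that, locally on `Q`, the functions on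
`Q` are the functions on `X` whose pullbacks to `R` agree. Unlike the property of being a
coequalizer, it is visibly stable under flat base change. -/
structure IsRadicialQuotient (a b : R ⟶ X) (φ : X ⟶ Q) : Prop where
  w : a ≫ φ = b ≫ φ
  isAffineHom : IsAffineHom (a ≫ φ)
  isIntegralHom : IsIntegralHom φ
  universallyInjective : UniversallyInjective φ
  surjective : Surjective φ
  exists_isSectionEqualizer (q : Q) :
    ∃ V : Q.Opens, q ∈ V ∧ IsAffineOpen V ∧ IsSectionEqualizer a b φ V

theorem isPushout_appLE_of_isPullback {g : Q' ⟶ Q} {gX : X' ⟶ X} {φ : X ⟶ Q} {φ' : X' ⟶ Q'}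
    [IsAffineHom φ] (hX : IsPullback gX φ' φ g) {V : Q.Opens} {V' : Q'.Opens}
    (hV : IsAffineOpen V) (hV' : IsAffineOpen V') (hle : V' ≤ g ⁻¹ᵁ V)
    (hle' : φ' ⁻¹ᵁ V' ≤ gX ⁻¹ᵁ φ ⁻¹ᵁ V) :
    IsPushout (φ.app V) (g.appLE V V' hle) (gX.appLE (φ ⁻¹ᵁ V) (φ' ⁻¹ᵁ V') hle') (φ'.app V') := by
  have := (isIso_pushoutSection_iff hX hle le_rfl (inf_eq_right.mpr hle').symm).mp
    (isIso_pushoutSection_of_isAffineOpen hX hle le_rfl (inf_eq_right.mpr hle').symm hV hV'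
      (hV.preimage φ))
  simpa only [Scheme.Hom.app_eq_appLE] using this

theorem IsSectionEqualizer.of_isPullback_of_flat {g : Q' ⟶ Q} [Flat g] {gX : X' ⟶ X} {gR : R' ⟶ R}
    {a b : R ⟶ X} {φ : X ⟶ Q} {a' b' : R' ⟶ X'} {φ' : X' ⟶ Q'}
    [IsAffineHom φ] [IsAffineHom (a ≫ φ)]
    (hX : IsPullback gX φ' φ g) (hR : IsPullback gR (a' ≫ φ') (a ≫ φ) g)
    (ha : a' ≫ gX = gR ≫ a) (hb : b' ≫ gX = gR ≫ b)
    (w' : a' ≫ φ' = b' ≫ φ') {V : Q.Opens} (hV : IsAffineOpen V) (h : IsSectionEqualizer a b φ V)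
    {V' : Q'.Opens} (hV' : IsAffineOpen V') (hle : V' ≤ g ⁻¹ᵁ V) :
    IsSectionEqualizer a' b' φ' V' := by
  have hleX : φ' ⁻¹ᵁ V' ≤ gX ⁻¹ᵁ φ ⁻¹ᵁ V := by
    rw [← Scheme.Hom.comp_preimage, hX.w]
    exact φ'.preimage_mono hle
  have hleR : (a' ≫ φ') ⁻¹ᵁ V' ≤ gR ⁻¹ᵁ (a ≫ φ) ⁻¹ᵁ V := by
    rw [← Scheme.Hom.comp_preimage, hR.w]
    exact (a' ≫ φ').preimage_mono hle
  have hwA : φ.app V ≫ a.appLE (φ ⁻¹ᵁ V) ((a ≫ φ) ⁻¹ᵁ V) (a.comp_preimage φ V).le =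
      (a ≫ φ).app V := by
    simp only [Scheme.Hom.app_eq_appLE, Scheme.Hom.appLE_comp_appLE]
  obtain ⟨_, h⟩ := h
  refine ⟨w' ▸ (b'.comp_preimage φ' V').le, h.of_isPushout_of_flat (g.flat_appLE hV hV' hle)
    (isPushout_appLE_of_isPullback hX hV hV' hle hleX)
    (hwA ▸ isPushout_appLE_of_isPullback hR hV hV' hle hleR) ?_ ?_ ?_ ?_⟩ <;>
  simp only [Scheme.Hom.app_eq_appLE, Scheme.Hom.appLE_comp_appLE, ha, hb, w']

namespace IsRadicialQuotient

variable {a b : R ⟶ X} {φ : X ⟶ Q}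

theorem of_isPullback_of_flat (h : IsRadicialQuotient a b φ) {g : Q' ⟶ Q} [Flat g] {gX : X' ⟶ X}
    {gR : R' ⟶ R} {a' b' : R' ⟶ X'} {φ' : X' ⟶ Q'}
    (hX : IsPullback gX φ' φ g) (hR : IsPullback gR (a' ≫ φ') (a ≫ φ) g)
    (ha : a' ≫ gX = gR ≫ a) (hb : b' ≫ gX = gR ≫ b) (w : a' ≫ φ' = b' ≫ φ') :
    IsRadicialQuotient a' b' φ' where
  w := w
  isAffineHom := MorphismProperty.of_isPullback hR h.isAffineHom
  isIntegralHom := MorphismProperty.of_isPullback hX h.isIntegralHom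
  universallyInjective := MorphismProperty.of_isPullback hX h.universallyInjective
  surjective := MorphismProperty.of_isPullback hX h.surjective
  exists_isSectionEqualizer q' := by
    have := h.isIntegralHom
    have := h.isAffineHom
    obtain ⟨V, hqV, hV, hVeq⟩ := h.exists_isSectionEqualizer (g q')
    obtain ⟨V', hV', hqV', hle⟩ := exists_isAffineOpen_mem_and_subset (x := q') (U := g ⁻¹ᵁ V) hqV
    exact ⟨V', hqV', hV', hVeq.of_isPullback_of_flat hX hR ha hb w hV hV' hle⟩

theorem comp_isIso (h : IsRadicialQuotient a b φ) (g : Q ⟶ Q') [IsIso g] :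
    IsRadicialQuotient a b (φ ≫ g) :=
  h.of_isPullback_of_flat (g := inv g) (gX := 𝟙 X) (gR := 𝟙 R) (.of_horiz_isIso ⟨by simp⟩)
    (.of_horiz_isIso ⟨by simp⟩) (by simp) (by simp) (by rw [reassoc_of% h.w])

theorem exists_isSectionEqualizer_le (h : IsRadicialQuotient a b φ) {q : Q} {U : Q.Opens}
    (hq : q ∈ U) : ∃ V : Q.Opens, q ∈ V ∧ V ≤ U ∧ IsAffineOpen V ∧ IsSectionEqualizer a b φ V := by
  have := h.isIntegralHom
  have := h.isAffineHom
  obtain ⟨V, hqV, hV, hVeq⟩ := h.exists_isSectionEqualizer q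
  obtain ⟨V', hV', hqV', hle⟩ :=
    exists_isAffineOpen_mem_and_subset (x := q) (U := U ⊓ V) ⟨hq, hqV⟩
  exact ⟨V', hqV', hle.trans inf_le_left, hV',
    hVeq.of_isPullback_of_flat (g := 𝟙 Q) (.id_horiz φ) (.id_horiz (a ≫ φ)) (by simp) (by simp)
      h.w hV hV' (hle.trans inf_le_right)⟩

theorem isHomeomorph (h : IsRadicialQuotient a b φ) : IsHomeomorph φ := by
  have := h.isIntegralHom
  have := h.universallyInjective
  exact isHomeomorph_iff_continuous_isClosedMap_bijective.mpr
    ⟨φ.continuous, φ.isClosedMap, φ.injective, h.surjective.surj⟩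

theorem epi (h : IsRadicialQuotient a b φ) : Epi φ where
  left_cancellation {Z} t t' htt' := by
    have ht (q : Q) : t q = t' q := by
      obtain ⟨x, rfl⟩ := h.surjective.surj q
      rw [← Scheme.Hom.comp_apply, ← Scheme.Hom.comp_apply, htt']
    refine Scheme.hom_ext_of_forall _ _ fun q => ?_
    obtain ⟨W, hW, hqW, -⟩ := exists_isAffineOpen_mem_and_subset (x := t q) (U := ⊤) trivial
    obtain ⟨V, hqV, hVW, hV, _, hVeq⟩ :=
      h.exists_isSectionEqualizer_le (U := t ⁻¹ᵁ W) hqW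
    have hVW' : V ≤ t' ⁻¹ᵁ W := fun v hv => (congrArg (· ∈ W) (ht v)).mp (hVW hv)
    have key : t.appLE W V hVW = t'.appLE W V hVW' := by
      have : Mono (φ.app V) := ConcreteCategory.mono_of_injective _ hVeq.injective
      rw [← cancel_mono (φ.app V)]
      simp only [Scheme.Hom.app_eq_appLE, Scheme.Hom.appLE_comp_appLE, htt']
    refine ⟨V, hqV, ?_⟩
    rw [← cancel_epi hV.isoSpec.inv, hV.isoSpec_inv_ι_assoc, hV.isoSpec_inv_ι_assoc,
      ← hW.SpecMap_appLE_fromSpec t hV hVW, ← hW.SpecMap_appLE_fromSpec t' hV hVW', key]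

theorem epi_snd (h : IsRadicialQuotient a b φ) (g : Q' ⟶ Q) [Flat g] :
    Epi (pullback.snd φ g) := by
  let l (c : R ⟶ X) (hc : c ≫ φ = a ≫ φ) : pullback (a ≫ φ) g ⟶ pullback φ g :=
    pullback.lift (pullback.fst _ _ ≫ c) (pullback.snd _ _)
      (by rw [Category.assoc, hc, pullback.condition])
  have hl (c : R ⟶ X) (hc : c ≫ φ = a ≫ φ) :
      l c hc ≫ pullback.snd φ g = pullback.snd (a ≫ φ) g := pullback.lift_snd _ _ _
  have hR : IsPullback (pullback.fst (a ≫ φ) g) (l a rfl ≫ pullback.snd φ g) (a ≫ φ) g := by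
    rw [hl a rfl]
    exact .of_hasPullback _ _
  exact (h.of_isPullback_of_flat (.of_hasPullback φ g) hR (pullback.lift_fst _ _ _)
    (pullback.lift_fst _ _ _) ((hl a rfl).trans (hl b h.w.symm).symm)).epi

theorem exists_local_fac (h : IsRadicialQuotient a b φ) {Z : Scheme.{u}} {s : X ⟶ Z}
    (hs : a ≫ s = b ≫ s) (q : Q) :
    ∃ (V : Q.Opens) (t : V.toScheme ⟶ Z), q ∈ V ∧
      ∀ {T : Scheme.{u}} (x : T ⟶ X) (y : T ⟶ V), x ≫ φ = y ≫ V.ι → x ≫ s = y ≫ t := by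
  have := h.isIntegralHom
  obtain ⟨x, rfl⟩ := h.surjective.surj q
  obtain ⟨W, hW, hxW, -⟩ := exists_isAffineOpen_mem_and_subset (x := s x) (U := ⊤) trivial
  let U : Q.Opens := ⟨φ '' (s ⁻¹ᵁ W : X.Opens), h.isHomeomorph.isOpenMap _ (s ⁻¹ᵁ W).2⟩
  obtain ⟨V, hqV, hVU, hV, _, hVeq⟩ :=
    h.exists_isSectionEqualizer_le (q := φ x) (U := U) ⟨x, hxW, rfl⟩
  have hle : φ ⁻¹ᵁ V ≤ s ⁻¹ᵁ W := fun y hy => by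
    obtain ⟨z, hz, hzy⟩ := hVU hy
    exact h.isHomeomorph.injective hzy ▸ hz
  obtain ⟨l, hl⟩ := hVeq.exists_lift (s.appLE W (φ ⁻¹ᵁ V) hle)
    (by simp only [Scheme.Hom.appLE_comp_appLE, hs])
  have fac : (φ ∣_ V) ≫ V.toSpecΓ ≫ Spec.map l ≫ hW.fromSpec = (φ ⁻¹ᵁ V).ι ≫ s := by
    rw [← Scheme.Opens.toSpecΓ_naturality_assoc, ← Spec.map_comp_assoc, hl,
      hW.SpecMap_appLE_fromSpec s (hV.preimage φ), IsAffineOpen.toSpecΓ_fromSpec_assoc]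
  refine ⟨V, V.toSpecΓ ≫ Spec.map l ≫ hW.fromSpec, hqV, fun x y hxy => ?_⟩
  rw [← (isPullback_morphismRestrict φ V).flip.lift_fst x y hxy, Category.assoc, ← fac,
    IsPullback.lift_snd_assoc]

theorem exists_openCover_fac (h : IsRadicialQuotient a b φ) {Z : Scheme.{u}} {s : X ⟶ Z}
    (hs : a ≫ s = b ≫ s) :
    ∃ (𝒰 : Scheme.OpenCover.{u} Q) (t : ∀ i, 𝒰.X i ⟶ Z),
      ∀ {T : Scheme.{u}} i (x : T ⟶ X) (y : T ⟶ 𝒰.X i), x ≫ φ = y ≫ 𝒰.f i → x ≫ s = y ≫ t i := by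
  choose V t hqV ht using h.exists_local_fac hs
  have hV : TopologicalSpace.IsOpenCover V :=
    top_le_iff.mp fun q _ => TopologicalSpace.Opens.mem_iSup.mpr ⟨q, hqV q⟩
  exact ⟨Q.openCoverOfIsOpenCover V hV, t, fun q => ht q⟩

theorem exists_fac (h : IsRadicialQuotient a b φ) {Z : Scheme.{u}} {s : X ⟶ Z}
    (hs : a ≫ s = b ≫ s) : ∃ t : Q ⟶ Z, φ ≫ t = s := by
  obtain ⟨𝒰, t, ht⟩ := h.exists_openCover_fac hs
  have compat (i j) : pullback.fst (𝒰.f i) (𝒰.f j) ≫ t i = pullback.snd (𝒰.f i) (𝒰.f j) ≫ t j := by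
    let o : pullback (𝒰.f i) (𝒰.f j) ⟶ Q := pullback.fst _ _ ≫ 𝒰.f i
    have := h.epi_snd o
    rw [← cancel_epi (pullback.snd φ o), ← Category.assoc, ← Category.assoc,
      ← ht i (pullback.fst φ o), ← ht j (pullback.fst φ o)]
    · simp only [pullback.condition, Category.assoc, o]
    · simp only [pullback.condition, Category.assoc, o]
  refine ⟨𝒰.glueMorphisms t compat, Scheme.Cover.hom_ext (𝒰.pullback₁ φ) _ _ fun i : 𝒰.I₀ => ?_⟩
  have fac : pullback.fst φ (𝒰.f i) ≫ φ ≫ 𝒰.glueMorphisms t compat =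
      pullback.fst φ (𝒰.f i) ≫ s := by
    rw [pullback.condition_assoc, 𝒰.ι_glueMorphisms t compat, ht i _ _ pullback.condition]
  exact fac

theorem existsUnique_fac (h : IsRadicialQuotient a b φ) {Z : Scheme.{u}} {s : X ⟶ Z}
    (hs : a ≫ s = b ≫ s) : ∃! t : Q ⟶ Z, φ ≫ t = s := by
  obtain ⟨t, ht⟩ := h.exists_fac hs
  have := h.epi
  exact ⟨t, ht, fun t' ht' => (cancel_epi φ).mp (ht'.trans ht.symm)⟩

end IsRadicialQuotient

end RadicialQuotient

section Gluing

variable {X : Scheme.{u}} {𝒰 : Scheme.OpenCover.{u} X} [SmallCategory 𝒰.I₀] [𝒰.LocallyDirected]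
  {F : 𝒰.I₀ ⥤ Scheme.{u}} {π : 𝒰.functorOfLocallyDirected ⟶ F}

theorem map_app_eq_app_trans (π : 𝒰.functorOfLocallyDirected ⟶ F) {i j : 𝒰.I₀} (f : i ⟶ j)
    (x : 𝒰.X i) : F.map f (π.app i x) = π.app j (𝒰.trans f x) :=
  congr($(π.naturality f) x).symm

theorem isLocallyDirected_of_bijective (hπ : ∀ i, Function.Bijective (π.app i)) :
    (F ⋙ Scheme.forget).IsLocallyDirected where
  cond {i j k} fi fj xi xj hij := by
    obtain ⟨xi, rfl⟩ := (hπ i).2 xi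
    obtain ⟨xj, rfl⟩ := (hπ j).2 xj
    have htrans : 𝒰.trans fi xi = 𝒰.trans fj xj := (hπ k).1 <|
      (map_app_eq_app_trans π fi xi).symm.trans (hij.trans (map_app_eq_app_trans π fj xj))
    obtain ⟨l, fi, fj, x, rfl, rfl⟩ := 𝒰.exists_of_trans_eq_trans fi fj xi xj htrans
    exact ⟨l, fi, fj, π.app l x, map_app_eq_app_trans π fi x, map_app_eq_app_trans π fj x⟩

theorem exists_glued_hom [Quiver.IsThin 𝒰.I₀] [∀ {i j} (f : i ⟶ j), IsOpenImmersion (F.map f)]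
    (hπ : ∀ i, Function.Bijective (π.app i)) :
    ∃ (Q : Scheme.{u}) (φ : X ⟶ Q) (ι : ∀ i, F.obj i ⟶ Q) (_ : ∀ i, IsOpenImmersion (ι i)),
      (∀ q, ∃ i, q ∈ (ι i).opensRange) ∧
      ∀ i, 𝒰.f i ≫ φ = π.app i ≫ ι i ∧ φ ⁻¹ᵁ (ι i).opensRange = (𝒰.f i).opensRange := by
  have := isLocallyDirected_of_bijective hπ
  let φ : X ⟶ colimit F := 𝒰.glueMorphismsOfLocallyDirected (fun i => π.app i ≫ colimit.ι F i)
    fun f => (π.naturality_assoc f _).trans (congrArg _ (colimit.w F f))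
  have hφ (i) : 𝒰.f i ≫ φ = π.app i ≫ colimit.ι F i := 𝒰.map_glueMorphismsOfLocallyDirected _ _ i
  have hφ_apply (i) (x : 𝒰.X i) : φ (𝒰.f i x) = colimit.ι F i (π.app i x) := congr($(hφ i) x)
  refine ⟨_, φ, colimit.ι F, inferInstance, Scheme.IsLocallyDirected.ι_jointly_surjective F,
    fun i => ⟨hφ i, SetLike.coe_injective ?_⟩⟩
  refine Set.Subset.antisymm ?_ (Set.range_subset_iff.mpr fun x => ⟨π.app i x, (hφ_apply i x).symm⟩)
  rintro x ⟨z, hz⟩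
  obtain ⟨j, y, rfl⟩ := 𝒰.exists_eq x
  rw [hφ_apply] at hz
  obtain ⟨l, fi, fj, w, rfl, hw⟩ := (Scheme.IsLocallyDirected.ι_eq_ι_iff F).mp hz
  obtain ⟨w, rfl⟩ := (hπ l).2 w
  have hw : 𝒰.trans fj w = y := (hπ j).1 ((map_app_eq_app_trans π fj w).symm.trans hw)
  have htrans {i j} (f : i ⟶ j) (x : 𝒰.X i) : 𝒰.f j (𝒰.trans f x) = 𝒰.f i x :=
    congr($(𝒰.trans_map f) x)
  exact ⟨𝒰.trans fi w, (htrans fi w).trans ((htrans fj w).symm.trans (congrArg _ hw))⟩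

end Gluing

section InvariantSections

variable {R X : Scheme.{u}} {a b : R ⟶ X}

theorem preimage_le_preimage_of_apply_eq (hab : ∀ r, a r = b r) (U : X.Opens) :
    a ⁻¹ᵁ U ≤ b ⁻¹ᵁ U :=
  fun r hr => (congrArg (· ∈ U) (hab r)).mp hr

variable (hab : ∀ r, a r = b r)

/-- The functions on `U` whose pullbacks along `a` and `b` agree. -/
def invariantSections (U : X.Opens) : Subring Γ(X, U) :=
  (a.appLE U (a ⁻¹ᵁ U) le_rfl).hom.eqLocus
    (b.appLE U (a ⁻¹ᵁ U) (preimage_le_preimage_of_apply_eq hab U)).hom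

/-- The presheaf of functions on `X` whose pullbacks along `a` and `b` agree. -/
def invariantPresheaf : X.Opensᵒᵖ ⥤ CommRingCat.{u} where
  obj U := .of (invariantSections hab U.unop)
  map {V U} i := CommRingCat.ofHom <| (X.presheaf.map i).hom.restrict _ _ fun x hx => by
    have ha := congr($(a.map_appLE (V := a ⁻¹ᵁ U.unop) le_rfl i) x)
    have hb := congr($(b.map_appLE (preimage_le_preimage_of_apply_eq hab U.unop) i) x)
    have hx := congrArg (R.presheaf.map (homOfLE (a.preimage_mono i.unop.le)).op) hx
    simp only [← CommRingCat.comp_apply, Scheme.Hom.appLE_map] at hx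
    exact ha.trans (hx.trans hb.symm)
  map_id U := by
    ext x
    exact congr($(X.presheaf.map_id U) x.1)
  map_comp f g := by
    ext x
    exact congr($(X.presheaf.map_comp f g) x.1)

/-- The inclusion of the invariant functions into all functions. -/
def invariantPresheafInclusion : invariantPresheaf hab ⟶ X.presheaf where
  app U := CommRingCat.ofHom (invariantSections hab U.unop).subtype

theorem isRingEqualizer_invariantPresheafInclusion_app (U : X.Opens) :
    IsRingEqualizer ((invariantPresheafInclusion hab).app (op U)) (a.appLE U (a ⁻¹ᵁ U) le_rfl)
      (b.appLE U (a ⁻¹ᵁ U) (preimage_le_preimage_of_apply_eq hab U)) where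
  injective := Subtype.val_injective
  range_eq := Subtype.range_coe

theorem isOpenImmersion_SpecMap_invariantPresheaf_map [IsAffineHom a] {U V : X.Opens}
    (hV : IsAffineOpen V) (f : invariantSections hab V) (hU : U = X.basicOpen f.1) (i : U ⟶ V) :
    IsOpenImmersion (Spec.map ((invariantPresheaf hab).map i.op)) := by
  let j : a ⁻¹ᵁ U ⟶ a ⁻¹ᵁ V := homOfLE (a.preimage_mono i.le)
  have hU' : a ⁻¹ᵁ U = R.basicOpen (a.appLE V (a ⁻¹ᵁ V) le_rfl f.1) := by
    rw [hU, Scheme.preimage_basicOpen, Scheme.Hom.app_eq_appLE]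
  refine (isRingEqualizer_invariantPresheafInclusion_app
    hab V).isOpenImmersion_SpecMap_of_isLocalization_away
    (isRingEqualizer_invariantPresheafInclusion_app hab U)
    ((invariantPresheafInclusion hab).naturality i.op) (v := R.presheaf.map j.op) ?_ ?_
    (hV.isLocalization_of_eq_basicOpen f.1 i hU)
    ((hV.preimage a).isLocalization_of_eq_basicOpen _ j hU')
  · rw [Scheme.Hom.map_appLE, Scheme.Hom.appLE_map]
  · rw [Scheme.Hom.map_appLE, Scheme.Hom.appLE_map]

end InvariantSections

section Existence

variable {R X Q : Scheme.{u}} {a b : R ⟶ X} {e : X ⟶ R}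

theorem isNilpotent_of_app_eq_zero_of_surjective (e : X ⟶ R) [Surjective e] {U : R.Opens}
    (hU : IsCompact (U : Set R)) {y : Γ(R, U)} (hy : e.app U y = 0) : IsNilpotent y := by
  rw [Scheme.isNilpotent_iff_basicOpen_eq_bot_of_isCompact hU, eq_bot_iff]
  intro r hr
  obtain ⟨x, rfl⟩ := e.surjective r
  have hx : x ∈ e ⁻¹ᵁ R.basicOpen y := hr
  rwa [Scheme.preimage_basicOpen, hy, Scheme.basicOpen_zero] at hx

theorem apply_eq_apply_of_section [Surjective e] (hea : e ≫ a = 𝟙 X) (heb : e ≫ b = 𝟙 X) (r : R) :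
    a r = b r := by
  obtain ⟨x, rfl⟩ := e.surjective r
  rw [← Scheme.Hom.comp_apply, ← Scheme.Hom.comp_apply, hea, heb]

theorem exists_pow_mem_invariantSections [Surjective e] [IsAffineHom a] (hea : e ≫ a = 𝟙 X)
    (heb : e ≫ b = 𝟙 X) (hab : ∀ r, a r = b r) {p : ℕ} [Fact p.Prime] {U : X.Opens}
    (hU : IsAffineOpen U) (hp : (p : Γ(X, U)) = 0) (x : Γ(X, U)) :
    ∃ n, x ^ p ^ n ∈ invariantSections hab U := by
  let ax := a.appLE U (a ⁻¹ᵁ U) le_rfl x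
  let bx := b.appLE U (a ⁻¹ᵁ U) (preimage_le_preimage_of_apply_eq hab U) x
  have hpR : (p : Γ(R, a ⁻¹ᵁ U)) = 0 := by
    simpa using congr((a.appLE U (a ⁻¹ᵁ U) le_rfl).hom $hp)
  have hsub : e.app (a ⁻¹ᵁ U) (ax - bx) = 0 := by
    rw [map_sub, sub_eq_zero, ← CommRingCat.comp_apply, ← CommRingCat.comp_apply,
      Scheme.Hom.app_eq_appLE, Scheme.Hom.appLE_comp_appLE, Scheme.Hom.appLE_comp_appLE]
    simp only [hea, heb]
  obtain ⟨n, hn⟩ := exists_pow_eq_pow_of_isNilpotent_sub hpR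
    (isNilpotent_of_app_eq_zero_of_surjective e (hU.preimage a).isCompact hsub)
  exact ⟨n, (map_pow _ x _).trans (hn.trans (map_pow _ x _).symm)⟩

theorem bijective_SpecMap_of_pow_mem {A B : CommRingCat.{u}} {i : A ⟶ B} {p : ℕ} [Fact p.Prime]
    (hi : Function.Injective i) (h : ∀ x, ∃ n, x ^ p ^ n ∈ Set.range i) :
    Function.Bijective (Spec.map i) := by
  refine (PrimeSpectrum.isHomeomorph_comap i.hom (fun x => ?_) ?_).bijective
  · obtain ⟨n, y, hy⟩ := h x
    exact ⟨p ^ n, pow_pos (Fact.out : p.Prime).pos n, y, hy⟩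
  · exact ((RingHom.injective_iff_ker_eq_bot i.hom).mp hi).trans_le bot_le

theorem isSectionEqualizer_opensRange (hab : ∀ r, a r = b r) {φ : X ⟶ Q} {S : CommRingCat.{u}}
    {ι : Spec S ⟶ Q} [IsOpenImmersion ι] {U : X.Opens} (hU : IsAffineOpen U)
    (hpre : φ ⁻¹ᵁ ι.opensRange = U) {i : S ⟶ Γ(X, U)}
    (hi : IsRingEqualizer i (a.appLE U (a ⁻¹ᵁ U) le_rfl)
      (b.appLE U (a ⁻¹ᵁ U) (preimage_le_preimage_of_apply_eq hab U)))
    (hφ : hU.fromSpec ≫ φ = Spec.map i ≫ ι) :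
    IsSectionEqualizer a b φ ι.opensRange := by
  subst hpre
  have hV : IsAffineOpen ι.opensRange := isAffineOpen_opensRange ι
  let e := IsOpenImmersion.isoOfRangeEq ι hV.fromSpec (by simp)
  obtain ⟨j, hj⟩ := Spec.map_surjective e.hom
  have : IsIso (Spec.map j) := hj ▸ inferInstanceAs (IsIso e.hom)
  have : IsIso (Scheme.Spec.map j.op) := this
  have : IsIso j.op := isIso_of_reflects_iso j.op Scheme.Spec
  have : IsIso j := isIso_of_op j
  have happ : φ.app ι.opensRange = j ≫ i := by
    apply Spec.map_injective
    rw [← cancel_mono hV.fromSpec, Scheme.Hom.app_eq_appLE, hV.SpecMap_appLE_fromSpec φ hU, hφ,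
      Spec.map_comp, Category.assoc, hj, IsOpenImmersion.isoOfRangeEq_hom_fac]
  exact ⟨preimage_le_preimage_of_apply_eq hab (φ ⁻¹ᵁ ι.opensRange), happ ▸ hi.iso_comp j⟩

theorem exists_forall_isSectionEqualizer [Surjective e] [IsAffineHom a] (hea : e ≫ a = 𝟙 X)
    (heb : e ≫ b = 𝟙 X) (hab : ∀ r, a r = b r) {p : ℕ} [Fact p.Prime]
    (hp : ∀ U : X.Opens, (p : Γ(X, U)) = 0) :
    ∃ (Q : Scheme.{u}) (φ : X ⟶ Q), ∀ q, ∃ V : Q.Opens,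
      q ∈ V ∧ IsAffineOpen V ∧ IsAffineOpen (φ ⁻¹ᵁ V) ∧
      IsSectionEqualizer a b φ V := by
  have hpow {U : X.Opens} (hU : IsAffineOpen U) (x : Γ(X, U)) :=
    exists_pow_mem_invariantSections hea heb hab hU (hp U) x
  let F : X.AffineZariskiSite ⥤ Scheme.{u} :=
    Scheme.AffineZariskiSite.toOpensFunctor X ⋙ (invariantPresheaf hab).rightOp ⋙ Scheme.Spec
  let π : (Scheme.AffineZariskiSite.directedCover X).functorOfLocallyDirected ⟶ F :=
    (Scheme.AffineZariskiSite.restrictIsoSpec X).hom ≫ Functor.whiskerLeft _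
      (Functor.whiskerRight (NatTrans.rightOp (invariantPresheafInclusion hab)) Scheme.Spec)
  have hF {U V : X.AffineZariskiSite} (g : U ⟶ V) : IsOpenImmersion (F.map g) := by
    obtain ⟨f, hf⟩ := leOfHom g
    obtain ⟨n, hn⟩ := hpow V.2 f
    refine isOpenImmersion_SpecMap_invariantPresheaf_map hab V.2 ⟨f ^ p ^ n, hn⟩ ?_
      (homOfLE (Scheme.AffineZariskiSite.toOpens_mono (leOfHom g)))
    exact hf.symm.trans (Scheme.basicOpen_pow _ _ (pow_pos (Fact.out : p.Prime).pos n)).symm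
  have hπ (U : X.AffineZariskiSite) : Function.Bijective (π.app U) := by
    have hincl := isRingEqualizer_invariantPresheafInclusion_app hab U.1
    exact (bijective_SpecMap_of_pow_mem (p := p) hincl.injective
      fun x => hincl.range_eq ▸ hpow U.2 x).comp U.2.isoSpec.hom.homeomorph.bijective
  obtain ⟨Q, φ, ι, hι, hcover, hφ⟩ :=
    exists_glued_hom (𝒰 := Scheme.AffineZariskiSite.directedCover X) hπ
  refine ⟨Q, φ, fun q => ?_⟩
  obtain ⟨U, hq⟩ := hcover q
  obtain ⟨hUφ, hUpre⟩ := hφ U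
  have hspec : U.2.fromSpec ≫ φ =
      Spec.map ((invariantPresheafInclusion hab).app (op U.1)) ≫ ι U := by
    rw [← U.2.isoSpec_inv_ι, Category.assoc, Iso.inv_comp_eq]
    exact hUφ
  have hpre : φ ⁻¹ᵁ (ι U).opensRange = U.1 := hUpre.trans U.1.opensRange_ι
  have := hι U
  have : IsAffine (F.obj U) := isAffine_Spec _
  exact ⟨(ι U).opensRange, hq, isAffineOpen_opensRange _, hpre ▸ U.2,
    isSectionEqualizer_opensRange hab U.2 hpre
      (isRingEqualizer_invariantPresheafInclusion_app hab U.1) hspec⟩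

theorem comp_eq_comp_of_isSectionEqualizer [IsAffineHom a] {φ : X ⟶ Q}
    (h : ∀ q, ∃ V : Q.Opens, q ∈ V ∧ IsAffineOpen V ∧ IsAffineOpen (φ ⁻¹ᵁ V) ∧
      IsSectionEqualizer a b φ V) :
    a ≫ φ = b ≫ φ := by
  refine Scheme.hom_ext_of_forall _ _ fun r => ?_
  obtain ⟨V, hq, hV, hV', hle, hVeq⟩ := h (φ (a r))
  have hW : IsAffineOpen ((a ≫ φ) ⁻¹ᵁ V) := hV'.preimage a
  have key := hVeq.comp_eq
  rw [Scheme.Hom.app_eq_appLE, Scheme.Hom.appLE_comp_appLE, Scheme.Hom.appLE_comp_appLE] at key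
  refine ⟨(a ≫ φ) ⁻¹ᵁ V, hq, ?_⟩
  rw [← cancel_epi hW.isoSpec.inv, hW.isoSpec_inv_ι_assoc, hW.isoSpec_inv_ι_assoc,
    ← hV.SpecMap_appLE_fromSpec (a ≫ φ) hW le_rfl, key, hV.SpecMap_appLE_fromSpec (b ≫ φ) hW]

theorem of_forall_exists_SpecMap_app {P : MorphismProperty Scheme.{u}} [IsZariskiLocalAtTarget P]
    {φ : X ⟶ Q} (h : ∀ q, ∃ V : Q.Opens, q ∈ V ∧ IsAffineOpen V ∧ IsAffineOpen (φ ⁻¹ᵁ V) ∧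
      P (Spec.map (φ.app V))) : P φ := by
  choose V hq hV hV' hP using h
  refine (IsZariskiLocalAtTarget.iff_of_iSup_eq_top (P := P) V ?_).mpr fun q => ?_
  · exact top_le_iff.mp fun q _ => TopologicalSpace.Opens.mem_iSup.mpr ⟨q, hq q⟩
  · have key := Scheme.Opens.toSpecΓ_naturality φ (V q)
    have : IsIso (V q).toSpecΓ := inferInstanceAs (IsIso (hV q).isoSpec.hom)
    have : IsIso (φ ⁻¹ᵁ V q).toSpecΓ := inferInstanceAs (IsIso (hV' q).isoSpec.hom)
    rw [← P.cancel_right_of_respectsIso _ (V q).toSpecΓ, ← key, P.cancel_left_of_respectsIso]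
    exact hP q

theorem IsRadicialQuotient.of_isSectionEqualizer [IsAffineHom a] {φ : X ⟶ Q} {p : ℕ} [Fact p.Prime]
    (h : ∀ q, ∃ V : Q.Opens, q ∈ V ∧ IsAffineOpen V ∧ IsAffineOpen (φ ⁻¹ᵁ V) ∧
      (p : Γ(X, φ ⁻¹ᵁ V)) = 0 ∧ (∀ x : Γ(X, φ ⁻¹ᵁ V), ∃ n, x ^ p ^ n ∈ Set.range (φ.app V)) ∧
      IsSectionEqualizer a b φ V) :
    IsRadicialQuotient a b φ := by
  have := (HasAffineProperty.iff.mp IsIntegralHom.hasAffineProperty.{u}).1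
  have hint : IsIntegralHom φ := of_forall_exists_SpecMap_app fun q => by
    obtain ⟨V, hq, hV, hV', -, hpow, -⟩ := h q
    exact ⟨V, hq, hV, hV', isIntegralHom_SpecMap_of_pow_mem _ hpow⟩
  exact
  { w := comp_eq_comp_of_isSectionEqualizer fun q => by
      obtain ⟨V, hq, hV, hV', -, -, hVeq⟩ := h q
      exact ⟨V, hq, hV, hV', hVeq⟩
    isAffineHom := inferInstance
    isIntegralHom := hint
    universallyInjective := of_forall_exists_SpecMap_app fun q => by
      obtain ⟨V, hq, hV, hV', hp, hpow, -⟩ := h q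
      exact ⟨V, hq, hV, hV', universallyInjective_SpecMap_of_pow_mem _ hp hpow⟩
    surjective := of_forall_exists_SpecMap_app fun q => by
      obtain ⟨V, hq, hV, hV', -, hpow, hVeq⟩ := h q
      obtain ⟨_, hVeq⟩ := hVeq
      exact ⟨V, hq, hV, hV', ⟨(bijective_SpecMap_of_pow_mem hVeq.injective hpow).surjective⟩⟩
    exists_isSectionEqualizer := fun q => by
      obtain ⟨V, hq, hV, -, -, -, hVeq⟩ := h q
      exact ⟨V, hq, hV, hVeq⟩ }

theorem exists_isRadicialQuotient [Surjective e] [IsAffineHom a] (hea : e ≫ a = 𝟙 X)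
    (heb : e ≫ b = 𝟙 X) {p : ℕ} [Fact p.Prime] (hp : ∀ U : X.Opens, (p : Γ(X, U)) = 0) :
    ∃ (Q : Scheme.{u}) (φ : X ⟶ Q), IsRadicialQuotient a b φ := by
  have hab := apply_eq_apply_of_section hea heb
  obtain ⟨Q, φ, h⟩ := exists_forall_isSectionEqualizer hea heb hab hp
  refine ⟨Q, φ, .of_isSectionEqualizer (p := p) fun q => ?_⟩
  obtain ⟨V, hq, hV, hV', hle, hVeq⟩ := h q
  refine ⟨V, hq, hV, hV', hp _, fun x => ?_, hle, hVeq⟩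
  rw [hVeq.range_eq]
  exact exists_pow_mem_invariantSections hea heb hab hV' (hp _) x

end Existence

section Product

open MonoidalCategory CartesianMonoidalCategory

variable {S : Scheme.{u}}

theorem isPullback_fst_whiskerRight {X Y : Over S} (f : X ⟶ Y) (Z : Over S) :
    IsPullback (fst X Z).left (f ▷ Z).left f.left (fst Y Z).left := by
  refine .of_bot ?_ (by simp) (.of_hasPullback Y.hom Z.hom)
  simpa using IsPullback.of_hasPullback X.hom Z.hom

theorem isPullback_snd_whiskerLeft {X Y : Over S} (Z : Over S) (f : X ⟶ Y) :
    IsPullback (snd Z X).left (Z ◁ f).left f.left (snd Z Y).left := by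
  refine .of_bot ?_ (by simp) (IsPullback.of_hasPullback Z.hom Y.hom).flip
  simpa using (IsPullback.of_hasPullback Z.hom X.hom).flip

instance flat_fst_left (X Y : Over S) [Flat Y.hom] : Flat (fst X Y).left :=
  inferInstanceAs (Flat (pullback.fst X.hom Y.hom))

instance flat_snd_left (X Y : Over S) [Flat X.hom] : Flat (snd X Y).left :=
  inferInstanceAs (Flat (pullback.snd X.hom Y.hom))

namespace IsRadicialQuotient

variable {R X Q R' X' Q' : Over S} {a b : R ⟶ X} {φ : X ⟶ Q} {a' b' : R' ⟶ X'} {φ' : X' ⟶ Q'}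

theorem comp_eq (h : IsRadicialQuotient a.left b.left φ.left) : a ≫ φ = b ≫ φ :=
  Over.OverMorphism.ext h.w

theorem whiskerRight (h : IsRadicialQuotient a.left b.left φ.left) (Z : Over S) [Flat Z.hom] :
    IsRadicialQuotient (a ▷ Z).left (b ▷ Z).left (φ ▷ Z).left :=
  h.of_isPullback_of_flat (isPullback_fst_whiskerRight φ Z)
    (by simpa only [comp_whiskerRight, Over.comp_left] using isPullback_fst_whiskerRight (a ≫ φ) Z)
    (isPullback_fst_whiskerRight a Z).w.symm (isPullback_fst_whiskerRight b Z).w.symm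
    (by rw [← Over.comp_left, ← Over.comp_left, ← comp_whiskerRight, ← comp_whiskerRight,
      h.comp_eq])

theorem whiskerLeft (h : IsRadicialQuotient a.left b.left φ.left) (Z : Over S) [Flat Z.hom] :
    IsRadicialQuotient (Z ◁ a).left (Z ◁ b).left (Z ◁ φ).left :=
  h.of_isPullback_of_flat (isPullback_snd_whiskerLeft Z φ)
    (by simpa only [whiskerLeft_comp, Over.comp_left] using isPullback_snd_whiskerLeft Z (a ≫ φ))
    (isPullback_snd_whiskerLeft Z a).w.symm (isPullback_snd_whiskerLeft Z b).w.symm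
    (by rw [← Over.comp_left, ← Over.comp_left, ← whiskerLeft_comp, ← whiskerLeft_comp,
      h.comp_eq])

theorem existsUnique_tensorHom_fac (h : IsRadicialQuotient a.left b.left φ.left)
    (h' : IsRadicialQuotient a'.left b'.left φ'.left) [Flat X'.hom] [Flat R'.hom] [Flat Q.hom]
    {Z : Scheme.{u}} {s : (X ⊗ X').left ⟶ Z}
    (hs : (a ▷ X').left ≫ s = (b ▷ X').left ≫ s)
    (hs' : (X ◁ a').left ≫ s = (X ◁ b').left ≫ s) :
    ∃! t : (Q ⊗ Q').left ⟶ Z, (φ ⊗ₘ φ').left ≫ t = s := by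
  obtain ⟨s₁, rfl⟩ := (h.whiskerRight X').exists_fac hs
  have := (h.whiskerRight X').epi
  have := (h.whiskerRight R').epi
  have := (h'.whiskerLeft Q).epi
  have hs₁ : (Q ◁ a').left ≫ s₁ = (Q ◁ b').left ≫ s₁ := by
    rw [← cancel_epi (φ ▷ R').left]
    simpa only [← Over.comp_left_assoc, whisker_exchange] using hs'
  obtain ⟨t, rfl⟩ := (h'.whiskerLeft Q).exists_fac hs₁
  simp only [MonoidalCategory.tensorHom_def, Over.comp_left, Category.assoc]
  exact ⟨t, rfl, fun t' ht' => (cancel_epi _).mp ((cancel_epi _).mp ht')⟩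

end IsRadicialQuotient

end Product

section Action

open MonoidalCategory CartesianMonoidalCategory

variable {k : Type u} [Field k]

theorem natCast_section_eq_zero (p : ℕ) [CharP k p] {X : Scheme.{u}} (s : X ⟶ Spk k)
    (U : X.Opens) : (p : Γ(X, U)) = 0 := by
  have hp : (p : CommRingCat.of k) = 0 := CharP.cast_eq_zero k p
  have := congrArg ((Scheme.ΓSpecIso (.of k)).inv ≫ s.appLE ⊤ U le_top).hom hp
  rwa [map_natCast, map_zero] at this

instance flat_of_field {X : Scheme.{u}} (s : X ⟶ Spk k) : Flat s := by
  have : IsIntegral (Spk k) := inferInstanceAs (IsIntegral (Spec (CommRingCat.of k)))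
  have : Subsingleton (Spk k) := inferInstanceAs (Subsingleton (PrimeSpectrum k))
  infer_instance

theorem surjective_of_comp_eq_id {X Y : Scheme.{u}} {e : X ⟶ Y} {f : Y ⟶ X}
    [UniversallyInjective f] (h : e ≫ f = 𝟙 X) : Surjective e where
  surj y := ⟨f y, f.injective (congr($h (f y)))⟩

namespace SchemeOver

/-- A scheme over `k` as an object of the category of schemes over `Spec k`. -/
abbrev toOver (X : SchemeOver k) : Over (Spk k) :=
  Over.mk X.str

/-- The fiber product over `Spec k`. -/
abbrev prod (X Y : SchemeOver k) : SchemeOver k :=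
  ⟨pullback X.str Y.str, pullback.fst X.str Y.str ≫ X.str⟩

end SchemeOver

variable {I J P : GroupSchemeOver k} {X Y Q Q' : SchemeOver k}

namespace GroupSchemeOver

/-- The section `x ↦ (1, x)` of the projection `I ×ₖ X ⟶ X`. -/
def unitSection (I : GroupSchemeOver k) (X : SchemeOver k) :
    X.carrier ⟶ (I.toOver ⊗ X.toOver).left :=
  pullback.lift (X.str ≫ I.one) (𝟙 _) (by simp [I.one_str])

theorem unitSection_snd (I : GroupSchemeOver k) (X : SchemeOver k) :
    I.unitSection X ≫ (snd I.toOver X.toOver).left = 𝟙 X.carrier :=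
  pullback.lift_snd _ _ _

end GroupSchemeOver

namespace ActionOver

/-- The action as a morphism `I ×ₖ X ⟶ X`. -/
def actionMap (α : ActionOver I X) : I.toOver ⊗ X.toOver ⟶ X.toOver :=
  Over.homMk (α.act (pullback.fst I.str X.str) (pullback.snd I.str X.str) pullback.condition) <| by
    simpa using (α.act_str _ _ _).trans pullback.condition.symm

/-- A morphism is invariant if it takes equal values on a point and its translates. -/
def IsInvariant (α : ActionOver I X) {Z : Scheme.{u}} (s : X.carrier ⟶ Z) : Prop :=
  ∀ {T : Scheme.{u}} (g : T ⟶ I.carrier) (x : T ⟶ X.carrier) (h), α.act g x h ≫ s = x ≫ s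

variable (α : ActionOver I X)

theorem lift_actionMap {T : Scheme.{u}} (g : T ⟶ I.carrier) (x : T ⟶ X.carrier)
    (h : g ≫ I.str = x ≫ X.str) : pullback.lift g x h ≫ α.actionMap.left = α.act g x h := by
  have hg := pullback.lift_fst g x h
  have hx := pullback.lift_snd g x h
  exact (α.act_natural _ _ _ _ (by rw [hg, hx, h])).trans (α.act_congr hg hx _ _)

theorem unitSection_actionMap : I.unitSection X ≫ α.actionMap.left = 𝟙 X.carrier :=
  (α.lift_actionMap _ _ _).trans <|
    (α.act_congr (Category.id_comp _).symm rfl _ (by simp [I.one_str])).trans (α.one_act _ _)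

theorem isInvariant_iff {Z : Scheme.{u}} {s : X.carrier ⟶ Z} :
    α.IsInvariant s ↔ (snd I.toOver X.toOver).left ≫ s = α.actionMap.left ≫ s := by
  refine ⟨fun hs => (hs _ _ _).symm, fun hs T g x h => ?_⟩
  rw [← α.lift_actionMap, Category.assoc, ← hs]
  exact pullback.lift_snd_assoc g x h s

end ActionOver

namespace IsCatQuotient

variable {α : ActionOver I X} {φ : X.carrier ⟶ Q.carrier} {φ' : X.carrier ⟶ Q'.carrier}

theorem existsUnique_isIso_fac (h : IsCatQuotient α Q φ) (h' : IsCatQuotient α Q' φ') :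
    ∃ θ : Q.carrier ⟶ Q'.carrier, IsIso θ ∧ φ ≫ θ = φ' ∧ ∀ θ', φ ≫ θ' = φ' → θ' = θ := by
  obtain ⟨θ, hθ, hθ_unique⟩ := h.2.2 Q' φ' h'.1 h'.2.1
  obtain ⟨η, hη, -⟩ := h'.2.2 Q φ h.1 h.2.1
  have hθη : θ ≫ η = 𝟙 _ := (h.2.2 Q φ h.1 h.2.1).unique
    ((reassoc_of% hθ) η |>.trans hη) (Category.comp_id φ)
  have hηθ : η ≫ θ = 𝟙 _ := (h'.2.2 Q' φ' h'.1 h'.2.1).unique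
    ((reassoc_of% hη) θ |>.trans hθ) (Category.comp_id φ')
  exact ⟨θ, ⟨η, hθη, hηθ⟩, hθ, hθ_unique⟩

theorem of_isRadicialQuotient
    (h : IsRadicialQuotient (snd I.toOver X.toOver).left α.actionMap.left φ)
    (hφ : φ ≫ Q.str = X.str) : IsCatQuotient α Q φ :=
  ⟨hφ, α.isInvariant_iff.mpr h.w, fun _ _ _ hu =>
    h.existsUnique_fac (α.isInvariant_iff.mp hu)⟩

theorem isRadicialQuotient (p : ℕ) [Fact p.Prime] [CharP k p] [IsAffineHom I.str]
    [UniversallyInjective I.str] (h : IsCatQuotient α Q φ) :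
    IsRadicialQuotient (snd I.toOver X.toOver).left α.actionMap.left φ := by
  have : IsAffineHom (snd I.toOver X.toOver).left :=
    MorphismProperty.of_isPullback (.of_hasPullback I.str X.str) ‹_›
  have : UniversallyInjective (snd I.toOver X.toOver).left :=
    MorphismProperty.of_isPullback (.of_hasPullback I.str X.str) ‹_›
  have := surjective_of_comp_eq_id (I.unitSection_snd X)
  obtain ⟨Q', φ', hφ'⟩ := exists_isRadicialQuotient (I.unitSection_snd X) α.unitSection_actionMap
    (natCast_section_eq_zero p X.str)
  obtain ⟨π, hπ, -⟩ := hφ'.existsUnique_fac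
    ((Over.w (snd I.toOver X.toOver)).trans (Over.w α.actionMap).symm)
  obtain ⟨θ, _, rfl, -⟩ := (of_isRadicialQuotient (Q := ⟨Q', π⟩) hφ' hπ).existsUnique_isIso_fac h
  exact hφ'.comp_isIso θ

end IsCatQuotient

namespace ActionOver

/-- The group `P` is the product of `I` and `J`, with projections `pI` and `pJ`, and acts
componentwise on `X ×ₖ Y`. -/
structure IsProductAction (αX : ActionOver I X) (αY : ActionOver J Y) (pI : GroupHom P I)
    (pJ : GroupHom P J) (αXY : ActionOver P (X.prod Y)) : Prop where
  isPullback : IsPullback pI.hom pJ.hom I.str J.str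
  act_fst {T : Scheme.{u}} (g : T ⟶ P.carrier) (w : T ⟶ pullback X.str Y.str) (h h') :
    αXY.act g w h ≫ pullback.fst X.str Y.str =
      αX.act (g ≫ pI.hom) (w ≫ pullback.fst X.str Y.str) h'
  act_snd {T : Scheme.{u}} (g : T ⟶ P.carrier) (w : T ⟶ pullback X.str Y.str) (h h') :
    αXY.act g w h ≫ pullback.snd X.str Y.str =
      αY.act (g ≫ pJ.hom) (w ≫ pullback.snd X.str Y.str) h'

namespace IsProductAction

variable {αX : ActionOver I X} {αY : ActionOver J Y} {pI : GroupHom P I} {pJ : GroupHom P J}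
  {αXY : ActionOver P (X.prod Y)}

theorem comp_eq_of_isInvariant (hα : IsProductAction αX αY pI pJ αXY) {Z : Scheme.{u}}
    {s : pullback X.str Y.str ⟶ Z} (hs : αXY.IsInvariant s) {T : Scheme.{u}}
    {w w' : T ⟶ pullback X.str Y.str} {i : T ⟶ I.carrier} {j : T ⟶ J.carrier} (hi hj)
    (hfst : w' ≫ pullback.fst X.str Y.str = αX.act i (w ≫ pullback.fst X.str Y.str) hi)
    (hsnd : w' ≫ pullback.snd X.str Y.str = αY.act j (w ≫ pullback.snd X.str Y.str) hj) :
    w' ≫ s = w ≫ s := by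
  obtain ⟨g, rfl, rfl⟩ : ∃ g : T ⟶ P.carrier, g ≫ pI.hom = i ∧ g ≫ pJ.hom = j :=
    hα.isPullback.exists_lift i j (by rw [hi, hj, Category.assoc, Category.assoc,
      pullback.condition])
  have hg : g ≫ P.str = w ≫ pullback.fst X.str Y.str ≫ X.str := by
    rw [← pI.hom_str, ← Category.assoc, hi, Category.assoc]
  have hw' : w' = αXY.act g w hg := pullback.hom_ext
    (hfst.trans (hα.act_fst g w hg hi).symm) (hsnd.trans (hα.act_snd g w hg hj).symm)
  rw [hw', hs]

theorem whiskerRight_comp_eq (hα : IsProductAction αX αY pI pJ αXY) {Z : Scheme.{u}}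
    {s : pullback X.str Y.str ⟶ Z} (hs : αXY.IsInvariant s) :
    (snd I.toOver X.toOver ▷ Y.toOver).left ≫ s = (αX.actionMap ▷ Y.toOver).left ≫ s := by
  let w : pullback (pullback.fst I.str X.str ≫ I.str) Y.str ⟶ pullback X.str Y.str :=
    (snd I.toOver X.toOver ▷ Y.toOver).left
  have hw : w ≫ pullback.fst X.str Y.str = pullback.fst _ _ ≫ pullback.snd I.str X.str :=
    Over.whiskerRight_left_fst (snd I.toOver X.toOver)
  have hi : (pullback.fst _ Y.str ≫ pullback.fst I.str X.str) ≫ I.str =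
      (w ≫ pullback.fst X.str Y.str) ≫ X.str := by
    rw [hw, Category.assoc, Category.assoc, pullback.condition]
  refine (hα.comp_eq_of_isInvariant hs hi (j := (w ≫ pullback.snd X.str Y.str) ≫ Y.str ≫ J.one)
    (by simp [J.one_str]) ?_ ?_).symm
  · rw [αX.act_congr rfl hw hi (hi.trans (hw ▸ rfl)), ← αX.act_natural _ _ _ pullback.condition]
    exact Over.whiskerRight_left_fst αX.actionMap
  · rw [αY.one_act]
    exact (Over.whiskerRight_left_snd _).trans (Over.whiskerRight_left_snd _).symm

theorem whiskerLeft_comp_eq (hα : IsProductAction αX αY pI pJ αXY) {Z : Scheme.{u}}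
    {s : pullback X.str Y.str ⟶ Z} (hs : αXY.IsInvariant s) :
    (X.toOver ◁ snd J.toOver Y.toOver).left ≫ s = (X.toOver ◁ αY.actionMap).left ≫ s := by
  let w : pullback X.str (pullback.fst J.str Y.str ≫ J.str) ⟶ pullback X.str Y.str :=
    (X.toOver ◁ snd J.toOver Y.toOver).left
  have hw : w ≫ pullback.snd X.str Y.str = pullback.snd _ _ ≫ pullback.snd J.str Y.str :=
    Over.whiskerLeft_left_snd (snd J.toOver Y.toOver)
  have hj : (pullback.snd X.str _ ≫ pullback.fst J.str Y.str) ≫ J.str =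
      (w ≫ pullback.snd X.str Y.str) ≫ Y.str := by
    rw [hw, Category.assoc, Category.assoc, pullback.condition]
  refine (hα.comp_eq_of_isInvariant hs (i := (w ≫ pullback.fst X.str Y.str) ≫ X.str ≫ I.one)
    (by simp [I.one_str]) hj ?_ ?_).symm
  · rw [αX.one_act]
    exact (Over.whiskerLeft_left_fst _).trans (Over.whiskerLeft_left_fst _).symm
  · rw [αY.act_congr rfl hw hj (hj.trans (hw ▸ rfl)), ← αY.act_natural _ _ _ pullback.condition]
    exact Over.whiskerLeft_left_snd αY.actionMap

variable {QX QY : SchemeOver k} {φX : X.carrier ⟶ QX.carrier} {φY : Y.carrier ⟶ QY.carrier}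
  {m : pullback X.str Y.str ⟶ pullback QX.str QY.str}

theorem isInvariant (hα : IsProductAction αX αY pI pJ αXY) (hφX : αX.IsInvariant φX)
    (hφY : αY.IsInvariant φY)
    (hfst : m ≫ pullback.fst QX.str QY.str = pullback.fst X.str Y.str ≫ φX)
    (hsnd : m ≫ pullback.snd QX.str QY.str = pullback.snd X.str Y.str ≫ φY) :
    αXY.IsInvariant m := by
  intro T g w h
  have hI : (g ≫ pI.hom) ≫ I.str = (w ≫ pullback.fst X.str Y.str) ≫ X.str := by
    rw [Category.assoc, pI.hom_str, h, Category.assoc]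
  have hJ : (g ≫ pJ.hom) ≫ J.str = (w ≫ pullback.snd X.str Y.str) ≫ Y.str := by
    rw [Category.assoc, pJ.hom_str, h, Category.assoc, ← pullback.condition]
  apply pullback.hom_ext
  · rw [Category.assoc, Category.assoc, hfst, reassoc_of% (hα.act_fst g w h hI), hφX,
      Category.assoc]
  · rw [Category.assoc, Category.assoc, hsnd, reassoc_of% (hα.act_snd g w h hJ), hφY,
      Category.assoc]

theorem isCatQuotient (hα : IsProductAction αX αY pI pJ αXY) (p : ℕ) [Fact p.Prime] [CharP k p]
    [IsAffineHom I.str] [UniversallyInjective I.str] [IsAffineHom J.str]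
    [UniversallyInjective J.str] (hφX : IsCatQuotient αX QX φX) (hφY : IsCatQuotient αY QY φY)
    (hfst : m ≫ pullback.fst QX.str QY.str = pullback.fst X.str Y.str ≫ φX)
    (hsnd : m ≫ pullback.snd QX.str QY.str = pullback.snd X.str Y.str ≫ φY) :
    IsCatQuotient αXY (QX.prod QY) m := by
  refine ⟨?_, hα.isInvariant hφX.2.1 hφY.2.1 hfst hsnd, fun Z s _ hs => ?_⟩
  · rw [reassoc_of% hfst, hφX.1]
  · let φ : X.toOver ⟶ QX.toOver := Over.homMk φX hφX.1
    let φ' : Y.toOver ⟶ QY.toOver := Over.homMk φY hφY.1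
    obtain rfl : m = (φ ⊗ₘ φ').left :=
      pullback.hom_ext (hfst.trans (by simp [φ])) (hsnd.trans (by simp [φ']))
    exact IsRadicialQuotient.existsUnique_tensorHom_fac (φ := φ) (φ' := φ')
      (hφX.isRadicialQuotient p) (hφY.isRadicialQuotient p) (hα.whiskerRight_comp_eq hs)
      (hα.whiskerLeft_comp_eq hs)

end IsProductAction

end ActionOver

end Action

theorem product_of_infinitesimal_quotients_general {k : Type u} [Field k] (p : ℕ) [Fact p.Prime]
    [CharP k p] {I J P : GroupSchemeOver k} [IsAffineHom I.str] [UniversallyInjective I.str]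
    [IsAffineHom J.str] [UniversallyInjective J.str] {X Y : SchemeOver k}
    {αX : ActionOver I X} {αY : ActionOver J Y} {pI : GroupHom P I} {pJ : GroupHom P J}
    {αXY : ActionOver P (X.prod Y)} (hα : αX.IsProductAction αY pI pJ αXY)
    {QX : SchemeOver k} {φX : X.carrier ⟶ QX.carrier} (hQX : IsCatQuotient αX QX φX)
    {QY : SchemeOver k} {φY : Y.carrier ⟶ QY.carrier} (hQY : IsCatQuotient αY QY φY)
    {QXY : SchemeOver k} {φXY : pullback X.str Y.str ⟶ QXY.carrier}
    (hQXY : IsCatQuotient αXY QXY φXY) (prodMor : pullback X.str Y.str ⟶ pullback QX.str QY.str)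
    (hfst : prodMor ≫ pullback.fst QX.str QY.str = pullback.fst X.str Y.str ≫ φX)
    (hsnd : prodMor ≫ pullback.snd QX.str QY.str = pullback.snd X.str Y.str ≫ φY) :
    ∃ θ : QXY.carrier ⟶ pullback QX.str QY.str,
      IsIso θ ∧ φXY ≫ θ = prodMor ∧
      ∀ θ' : QXY.carrier ⟶ pullback QX.str QY.str, φXY ≫ θ' = prodMor → θ' = θ :=
  hQXY.existsUnique_isIso_fac (hα.isCatQuotient p hQX hQY hfst hsnd)

/-- Let `k` be a field of characteristic `p > 0`, and let `X` (resp. `Y`) be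
a scheme of finite type over `k` with an action of an infinitesimal group scheme `I` (resp.
`J`). Then `φ_{X,I} × φ_{Y,J} : X ×ₖ Y ⟶ X/I ×ₖ Y/J` factors uniquely through an isomorphism
`(X ×ₖ Y)/(I ×ₖ J) ≅ X/I ×ₖ Y/J`. Here the product group `P = I ×ₖ J` and its componentwise
action on `X ×ₖ Y` are presented relationally. -/
theorem product_of_infinitesimal_quotients
    {k : Type u} [Field k] (p : ℕ) [Fact p.Prime] [CharP k p]
    (I J : GroupSchemeOver k) (hI : I.IsInfinitesimal) (hJ : J.IsInfinitesimal)
    (X Y : SchemeOver k) (hXft : X.IsFiniteType) (hYft : Y.IsFiniteType)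
    (αX : ActionOver I X) (αY : ActionOver J Y)
    -- the product group `P = I ×ₖ J`:
    (P : GroupSchemeOver k) (pI : GroupHom P I) (pJ : GroupHom P J)
    (hPpb : IsPullback pI.hom pJ.hom I.str J.str)
    -- the componentwise action of `P` on `X ×ₖ Y`:
    (αXY : ActionOver P ⟨pullback X.str Y.str, pullback.fst X.str Y.str ≫ X.str⟩)
    (hcompat₁ : ∀ {T : Scheme.{u}} (g : T ⟶ P.carrier) (w : T ⟶ pullback X.str Y.str)
      (h h'), αXY.act g w h ≫ pullback.fst X.str Y.str =
        αX.act (g ≫ pI.hom) (w ≫ pullback.fst X.str Y.str) h')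
    (hcompat₂ : ∀ {T : Scheme.{u}} (g : T ⟶ P.carrier) (w : T ⟶ pullback X.str Y.str)
      (h h'), αXY.act g w h ≫ pullback.snd X.str Y.str =
        αY.act (g ≫ pJ.hom) (w ≫ pullback.snd X.str Y.str) h')
    -- the three categorical quotients:
    (QX : SchemeOver k) (φX : X.carrier ⟶ QX.carrier) (hQX : IsCatQuotient αX QX φX)
    (QY : SchemeOver k) (φY : Y.carrier ⟶ QY.carrier) (hQY : IsCatQuotient αY QY φY)
    (QXY : SchemeOver k) (φXY : pullback X.str Y.str ⟶ QXY.carrier)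
    (hQXY : IsCatQuotient αXY QXY φXY) :
    ∀ prodMor : pullback X.str Y.str ⟶ pullback QX.str QY.str,
      prodMor ≫ pullback.fst QX.str QY.str = pullback.fst X.str Y.str ≫ φX →
      prodMor ≫ pullback.snd QX.str QY.str = pullback.snd X.str Y.str ≫ φY →
      ∃ θ : QXY.carrier ⟶ pullback QX.str QY.str,
        IsIso θ ∧ φXY ≫ θ = prodMor ∧
        ∀ θ' : QXY.carrier ⟶ pullback QX.str QY.str, φXY ≫ θ' = prodMor → θ' = θ := by
  obtain ⟨-, _, _⟩ := hI
  obtain ⟨-, _, _⟩ := hJ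
  exact fun _ => product_of_infinitesimal_quotients_general p ⟨hPpb, hcompat₁, hcompat₂⟩
    hQX hQY hQXY _
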